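/- There is a constant C > 0 such that for every finite subset F ⊂ ℤ and every p₀ ∈ (1, ∞), sup_{λ>0} λ · ( #{x ∈ ℤ : sup_{n ∈ ℕ} ℳ_{2^n}(𝟙_F)(x) > λ} )^{1/p₀} ≤ C (p₀ − 1)^{−2/p₀} (#F)^{1/p₀}, with C independent of F and p₀. -/

import Mathlib

open scoped BigOperators

/-- The set of primes `p ≤ N`. -/
def primesUpTo (N : ℕ) : Finset ℕ := (Finset.range (N + 1)).filter Nat.Prime

/-- `ϑ(N) = Σ_{p ∈ ℙ_N} log p`. -/
noncomputable def theta (N : ℕ) : ℝ := ∑ p ∈ primesUpTo N, Real.log p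

/-- The weighted average `ℳ_N f(x) = (1/ϑ(N)) Σ_{p ∈ ℙ_N} f(x + p) log p`. -/
noncomputable def weightedPrimeAvg (f : ℤ → ℝ) (N : ℕ) (x : ℤ) : ℝ :=
  (theta N)⁻¹ * ∑ p ∈ primesUpTo N, f (x + p) * Real.log p

/-!
At the scale `N = 2 ^ n`, let `m ^ 2` be comparable to `n`. The log-weighted primes up to `N` are
then dominated by a constant times the product of the normalized Brun weight for the primes
`≤ 2 ^ m` and the Selberg weight for the primes in `(2 ^ m, 2 ^ m ^ 2]`. Both weights have finite
expansions in Ramanujan sums, and the near-orthogonality of Ramanujan sums together with a `T T*`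
argument gives, for a weight whose coefficients are suitably summable, an `L²` maximal inequality
over all large scales. This applies to the three pieces obtained by telescoping the Brun weight
along `m = 2 ^ i * m₀`: the error of Brun's sieve at level `m₀`, the increments, and the
oscillation of the Selberg weight, each of which gains a factor `2 ^ (-m)`. What remains is the
average of `𝟙_F` times the Mertens product `∏_{p ≤ 2 ^ m₀} (1 - 1 / p)⁻¹ ≲ m₀ ^ 2`, which the
Hardy-Littlewood inequality controls. Choosing `m₀ ≈ log (1 / λ)` makes the errors harmless at
height `λ`, so the level set `E` satisfies `λ * #E ≲ (1 + log (1 / λ)) ^ 2 * #F`, and maximizing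
`λ ^ (p₀ - 1) * (1 + log (1 / λ)) ^ 2` over `λ` produces the factor `(p₀ - 1) ^ (-2 / p₀)`.
-/

namespace PrimeMaximal

open Finset

section Periodic
variable {R : Type*} [CommSemiring R]

theorem sum_range_mul_of_coprime {a b : ℕ} (ha : 0 < a) (hb : 0 < b) (hab : a.Coprime b)
    {f g : ℕ → R} (hf : Function.Periodic f a) (hg : Function.Periodic g b) :
    ∑ n ∈ range (a * b), f n * g n = (∑ n ∈ range a, f n) * ∑ n ∈ range b, g n := by
  rw [sum_mul_sum, ← sum_product']
  refine sum_bij' (fun n _ => (n % a, n % b)) (fun r _ => (Nat.chineseRemainder hab r.1 r.2 : ℕ))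
    ?_ ?_ ?_ ?_ ?_
  · intro n _
    simp [Nat.mod_lt _ ha, Nat.mod_lt _ hb]
  · intro r _
    simpa using Nat.chineseRemainder_lt_mul hab r.1 r.2 ha.ne' hb.ne'
  · intro n hn
    have hmod := (Nat.chineseRemainder hab (n % a) (n % b)).2
    refine Nat.ModEq.eq_of_lt_of_lt ?_
      (Nat.chineseRemainder_lt_mul hab _ _ ha.ne' hb.ne') (mem_range.1 hn)
    exact (Nat.modEq_and_modEq_iff_modEq_mul hab).1
      ⟨hmod.1.trans (Nat.mod_modEq _ _), hmod.2.trans (Nat.mod_modEq _ _)⟩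
  · rintro ⟨r, s⟩ hrs
    simp only [mem_product, mem_range] at hrs
    have hmod := (Nat.chineseRemainder hab r s).2
    exact Prod.ext (Eq.trans hmod.1 (Nat.mod_eq_of_lt hrs.1))
      (Eq.trans hmod.2 (Nat.mod_eq_of_lt hrs.2))
  · intro n _
    simp only [hf.map_mod_nat, hg.map_mod_nat]

theorem periodic_finset_prod {ι : Type*} {s : Finset ι} {m : ι → ℕ} {f : ι → ℕ → R}
    (hf : ∀ i ∈ s, Function.Periodic (f i) (m i)) :
    Function.Periodic (fun n => ∏ i ∈ s, f i n) (∏ i ∈ s, m i) := by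
  intro n
  refine prod_congr rfl fun i hi => ?_
  obtain ⟨k, hk⟩ := dvd_prod_of_mem m hi
  simpa only [hk, mul_comm, Nat.cast_id] using (hf i hi).nat_mul k n

theorem sum_range_prod_of_pairwise_coprime {ι : Type*} {s : Finset ι} {m : ι → ℕ}
    (hm : ∀ i ∈ s, 0 < m i) (hcop : (s : Set ι).Pairwise fun i j => (m i).Coprime (m j))
    {f : ι → ℕ → R} (hf : ∀ i ∈ s, Function.Periodic (f i) (m i)) :
    ∑ n ∈ range (∏ i ∈ s, m i), ∏ i ∈ s, f i n = ∏ i ∈ s, ∑ n ∈ range (m i), f i n := by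
  classical
  induction s using Finset.induction_on with
  | empty => simp
  | insert j s hj ih =>
    simp only [forall_mem_insert, coe_insert] at hm hf hcop
    have hcop_j : (m j).Coprime (∏ i ∈ s, m i) := Nat.Coprime.prod_right fun i hi =>
      hcop (Set.mem_insert _ _) (Set.mem_insert_of_mem _ hi) (ne_of_mem_of_not_mem hi hj).symm
    simp only [prod_insert hj]
    rw [sum_range_mul_of_coprime hm.1 (prod_pos hm.2) hcop_j hf.1 (periodic_finset_prod hf.2),
      ih hm.2 (hcop.mono (Set.subset_insert _ _)) hf.2]

theorem sum_range_mul_add_of_periodic {F : ℕ → R} {M : ℕ} (hF : Function.Periodic F M)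
    (q r : ℕ) :
    ∑ n ∈ range (M * q + r), F n = q * ∑ n ∈ range M, F n + ∑ n ∈ range r, F n := by
  induction q with
  | zero => simp
  | succ q ih =>
    have hshift : ∀ n, F (M + n) = F n := fun n => by rw [add_comm]; exact hF n
    rw [show M * (q + 1) + r = M + (M * q + r) by ring, sum_range_add]
    simp only [hshift, ih]
    push_cast
    ring

theorem abs_sum_range_sub_mul_mean_le {F : ℕ → ℝ} {M : ℕ} (hM : 0 < M)
    (hF : Function.Periodic F M) {K μ : ℝ} (hK : ∀ n, |F n| ≤ K)
    (hμ : ∑ n ∈ range M, F n = M * μ) (L : ℕ) :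
    |∑ n ∈ range L, F n - L * μ| ≤ 2 * M * K := by
  have hM' : (0 : ℝ) < M := by exact_mod_cast hM
  have hμK : |μ| ≤ K := by
    refine le_of_mul_le_mul_left ?_ hM'
    calc M * |μ| = |∑ n ∈ range M, F n| := by rw [hμ, abs_mul, Nat.abs_cast]
      _ ≤ ∑ n ∈ range M, |F n| := abs_sum_le_sum_abs _ _
      _ ≤ ∑ _n ∈ range M, K := sum_le_sum fun n _ => hK n
      _ = M * K := by simp
  have hremainder : ∑ n ∈ range L, F n - L * μ = ∑ n ∈ range (L % M), (F n - μ) := by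
    have hL : (L : ℝ) = M * (L / M : ℕ) + (L % M : ℕ) := by
      exact_mod_cast (Nat.div_add_mod L M).symm
    have hsum : ∑ n ∈ range L, F n = (L / M : ℕ) * (M * μ) + ∑ n ∈ range (L % M), F n := by
      rw [← hμ, ← sum_range_mul_add_of_periodic hF, Nat.div_add_mod]
    rw [hsum, sum_sub_distrib, sum_const, card_range, nsmul_eq_mul]
    linear_combination (-μ) * hL
  have hterm : ∀ n, |F n - μ| ≤ 2 * K := fun n => by
    linarith [abs_sub (F n) μ, hK n]
  have hmod : ((L % M : ℕ) : ℝ) ≤ M := by exact_mod_cast (Nat.mod_lt L hM).le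
  calc |∑ n ∈ range L, F n - L * μ| ≤ ∑ n ∈ range (L % M), |F n - μ| := by
        rw [hremainder]; exact abs_sum_le_sum_abs _ _
    _ ≤ ∑ _n ∈ range (L % M), 2 * K := sum_le_sum fun n _ => hterm n
    _ = (L % M : ℕ) * (2 * K) := by simp
    _ ≤ M * (2 * K) := mul_le_mul_of_nonneg_right hmod ((abs_nonneg _).trans (hterm 0))
    _ = 2 * M * K := by ring

theorem sum_range_le_of_periodic {F : ℕ → ℝ} {M : ℕ} (hM : 0 < M) (hF : Function.Periodic F M)
    (hF0 : ∀ n, 0 ≤ F n) {B : ℝ} (hB : ∑ n ∈ range M, F n ≤ M * B) (L : ℕ) :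
    ∑ n ∈ range L, F n ≤ (L + M) * B := by
  have hB0 : 0 ≤ B :=
    nonneg_of_mul_nonneg_right ((sum_nonneg fun n _ => hF0 n).trans hB) (by exact_mod_cast hM)
  have hcover : L ≤ M * (L / M + 1) := (Nat.lt_mul_div_succ L hM).le
  have hblocks : (L / M + 1) * M ≤ L + M := by
    have := Nat.div_mul_le_self L M
    rw [add_mul]; omega
  have hperiods := sum_range_mul_add_of_periodic hF (L / M + 1) 0
  rw [range_zero, sum_empty, add_zero, add_zero] at hperiods
  calc ∑ n ∈ range L, F n ≤ ∑ n ∈ range (M * (L / M + 1)), F n :=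
        sum_le_sum_of_subset_of_nonneg (range_subset_range.2 hcover) fun n _ _ => hF0 n
    _ = (L / M + 1 : ℕ) * ∑ n ∈ range M, F n := hperiods
    _ ≤ (L / M + 1 : ℕ) * (M * B) := by gcongr
    _ = ((L / M + 1) * M : ℕ) * B := by push_cast; ring
    _ ≤ (L + M) * B := by gcongr; exact_mod_cast hblocks

end Periodic

theorem sum_Ico_int_eq_sum_range {M : Type*} [AddCommMonoid M] (g : ℤ → M) (a : ℤ) (L : ℕ) :
    ∑ y ∈ Ico a (a + L), g y = ∑ n ∈ range L, g (a + n) := by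
  symm
  refine sum_bij (fun n _ => a + (n : ℤ)) ?_ ?_ ?_ ?_
  · intro n hn
    simpa using hn
  · intro n _ n' _ h
    omega
  · intro y hy
    rw [mem_Ico] at hy
    exact ⟨(y - a).toNat, by rw [mem_range]; omega, by omega⟩
  · intro n _
    rfl

section RamanujanSum

/-- Ramanujan's sum `c_p(n)` for a prime `p`. -/
noncomputable def ramanujanSum (p : ℕ) (n : ℤ) : ℝ := if (p : ℤ) ∣ n then (p : ℝ) - 1 else -1

/-- Ramanujan's sum `c_q(n)` for the squarefree modulus `q = ∏ p ∈ Q, p`, encoded by the set `Q` of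
its prime factors. -/
noncomputable def ramanujanProd (Q : Finset ℕ) (n : ℤ) : ℝ := ∏ p ∈ Q, ramanujanSum p n

/-- The squarefree integer whose set of prime factors is `Q`. -/
def modulus (Q : Finset ℕ) : ℕ := ∏ p ∈ Q, p

theorem modulus_pos {Q : Finset ℕ} (hQ : ∀ p ∈ Q, p.Prime) : 0 < modulus Q :=
  prod_pos fun p hp => (hQ p hp).pos

theorem ramanujanSum_eq (p : ℕ) (n : ℤ) :
    ramanujanSum p n = p * (if (p : ℤ) ∣ n then 1 else 0) - 1 := by
  unfold ramanujanSum
  split_ifs <;> simp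

theorem periodic_ramanujanSum (p : ℕ) (a : ℤ) :
    Function.Periodic (fun n : ℕ => ramanujanSum p (a + n)) p := by
  intro n
  have : (p : ℤ) ∣ a + ((n + p : ℕ) : ℤ) ↔ (p : ℤ) ∣ a + n := by
    push_cast
    rw [← add_assoc, dvd_add_self_right]
  simp only [ramanujanSum, this]

theorem abs_ramanujanSum_le {p : ℕ} (hp : 2 ≤ p) (n : ℤ) : |ramanujanSum p n| ≤ p := by
  have : (2 : ℝ) ≤ p := by exact_mod_cast hp
  unfold ramanujanSum
  split_ifs <;> rw [abs_le] <;> constructor <;> linarith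

theorem abs_ramanujanProd_le {Q : Finset ℕ} (hQ : ∀ p ∈ Q, p.Prime) (n : ℤ) :
    |ramanujanProd Q n| ≤ modulus Q := by
  unfold ramanujanProd modulus
  rw [abs_prod]
  push_cast
  exact prod_le_prod (fun _ _ => abs_nonneg _) fun p hp => abs_ramanujanSum_le (hQ p hp).two_le n

theorem sum_range_ite_dvd {p : ℕ} (hp : 0 < p) (a : ℤ) :
    ∑ n ∈ range p, (if (p : ℤ) ∣ a + n then (1 : ℝ) else 0) = 1 := by
  have hp' : (p : ℚ) ≠ 0 := by exact_mod_cast hp.ne'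
  rw [← sum_Ico_int_eq_sum_range (fun y => if (p : ℤ) ∣ y then (1 : ℝ) else 0), sum_boole]
  have hcard := Int.Ico_filter_dvd_card a (a + p) (r := p) (by exact_mod_cast hp)
  push_cast at hcard
  rw [add_div, div_self hp', Int.ceil_add_one] at hcard
  have : #{y ∈ Ico a (a + p) | (p : ℤ) ∣ y} = 1 := by omega
  exact_mod_cast this

theorem sum_range_ramanujanSum {p : ℕ} (hp : 0 < p) (a : ℤ) :
    ∑ n ∈ range p, ramanujanSum p (a + n) = 0 := by
  simp only [ramanujanSum_eq, sum_sub_distrib, ← mul_sum, sum_range_ite_dvd hp]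
  simp

theorem sum_range_ramanujanSum_mul {p : ℕ} (hp : 0 < p) (a b : ℤ) :
    ∑ n ∈ range p, ramanujanSum p (a + n) * ramanujanSum p (b + n) =
      p * ramanujanSum p (a - b) := by
  have hprod : ∀ n : ℕ, ramanujanSum p (a + n) * ramanujanSum p (b + n) =
      p * ramanujanSum p (a - b) * (if (p : ℤ) ∣ a + n then 1 else 0) -
        ramanujanSum p (b + n) := by
    intro n
    by_cases h : (p : ℤ) ∣ a + n
    · have hiff : (p : ℤ) ∣ b + n ↔ (p : ℤ) ∣ a - b := by
        rw [show a - b = (a + n) - (b + n) by ring, dvd_sub_right h]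
      simp only [ramanujanSum, h, hiff, if_true]
      ring
    · simp only [ramanujanSum, h, if_false]
      ring
  simp only [hprod, sum_sub_distrib, ← mul_sum, sum_range_ite_dvd hp, sum_range_ramanujanSum hp]
  ring

theorem sum_range_abs_ramanujanSum_le {p : ℕ} (hp : 0 < p) (a : ℤ) :
    ∑ n ∈ range p, |ramanujanSum p (a + n)| ≤ p * 2 := by
  have hp1 : (1 : ℝ) ≤ p := by exact_mod_cast hp
  have hterm : ∀ n : ℕ, |ramanujanSum p (a + n)| ≤
      p * (if (p : ℤ) ∣ a + n then (1 : ℝ) else 0) + 1 := by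
    intro n
    rw [ramanujanSum_eq, abs_le]
    split_ifs <;> constructor <;> linarith
  refine (sum_le_sum fun n _ => hterm n).trans_eq ?_
  rw [sum_add_distrib, ← mul_sum, sum_range_ite_dvd hp, sum_const, card_range, nsmul_eq_mul]
  ring

theorem pairwise_coprime_of_prime {Q : Finset ℕ} (hQ : ∀ p ∈ Q, p.Prime) :
    (Q : Set ℕ).Pairwise fun p q => p.Coprime q :=
  fun p hp q hq hpq => (Nat.coprime_primes (hQ p hp) (hQ q hq)).2 hpq

theorem sum_range_modulus_prod {Q : Finset ℕ} (hQ : ∀ p ∈ Q, p.Prime) {f : ℕ → ℕ → ℝ}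
    (hf : ∀ p ∈ Q, Function.Periodic (f p) p) :
    ∑ n ∈ range (modulus Q), ∏ p ∈ Q, f p n = ∏ p ∈ Q, ∑ n ∈ range p, f p n :=
  sum_range_prod_of_pairwise_coprime (fun p hp => (hQ p hp).pos) (pairwise_coprime_of_prime hQ) hf

theorem sum_range_abs_ramanujanProd_le {Q : Finset ℕ} (hQ : ∀ p ∈ Q, p.Prime) (a : ℤ) (L : ℕ) :
    ∑ n ∈ range L, |ramanujanProd Q (a + n)| ≤ (L + modulus Q) * 2 ^ #Q := by
  have hper : ∀ p ∈ Q, Function.Periodic (fun n : ℕ => |ramanujanSum p (a + n)|) p :=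
    fun p _ n => congrArg abs (periodic_ramanujanSum p a n)
  simp only [ramanujanProd, abs_prod]
  refine sum_range_le_of_periodic (modulus_pos hQ) (periodic_finset_prod hper)
    (fun n => prod_nonneg fun _ _ => abs_nonneg _) ?_ L
  calc ∑ n ∈ range (modulus Q), ∏ p ∈ Q, |ramanujanSum p (a + n)|
      = ∏ p ∈ Q, ∑ n ∈ range p, |ramanujanSum p (a + n)| := sum_range_modulus_prod hQ hper
    _ ≤ ∏ p ∈ Q, ((p : ℝ) * 2) := prod_le_prod (fun p _ => sum_nonneg fun _ _ => abs_nonneg _)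
        fun p hp => sum_range_abs_ramanujanSum_le (hQ p hp).pos a
    _ = modulus Q * 2 ^ #Q := by simp [modulus, prod_mul_distrib]

/-- The Euler factor at `p` of `n ↦ c_Q(a + n) c_Q'(b + n)`. -/
noncomputable def corrFactor (Q Q' : Finset ℕ) (a b : ℤ) (p n : ℕ) : ℝ :=
  (if p ∈ Q then ramanujanSum p (a + n) else 1) * if p ∈ Q' then ramanujanSum p (b + n) else 1

theorem ramanujanProd_mul_eq_prod_corrFactor (Q Q' : Finset ℕ) (a b : ℤ) (n : ℕ) :
    ramanujanProd Q (a + n) * ramanujanProd Q' (b + n) =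
      ∏ p ∈ Q ∪ Q', corrFactor Q Q' a b p n := by
  simp only [corrFactor, prod_mul_distrib, ramanujanProd, prod_ite_mem,
    inter_eq_right.2 (subset_union_left (s₁ := Q) (s₂ := Q')),
    inter_eq_right.2 (subset_union_right (s₁ := Q) (s₂ := Q'))]

theorem periodic_corrFactor (Q Q' : Finset ℕ) (a b : ℤ) (p : ℕ) :
    Function.Periodic (corrFactor Q Q' a b p) p := fun n => by
  simp only [corrFactor, periodic_ramanujanSum p a n, periodic_ramanujanSum p b n]

theorem prod_sum_range_corrFactor {Q Q' : Finset ℕ} (hprime : ∀ p ∈ Q ∪ Q', p.Prime) (a b : ℤ) :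
    ∏ p ∈ Q ∪ Q', ∑ n ∈ range p, corrFactor Q Q' a b p n =
      modulus (Q ∪ Q') * (if Q = Q' then ramanujanProd Q (a - b) else 0) := by
  split_ifs with h
  · subst h
    rw [union_idempotent] at hprime ⊢
    rw [modulus, ramanujanProd, Nat.cast_prod, ← prod_mul_distrib]
    refine prod_congr rfl fun p hp => ?_
    simpa only [corrFactor, hp, if_true] using sum_range_ramanujanSum_mul (hprime p hp).pos a b
  · obtain ⟨p, hp⟩ : ∃ p, p ∈ Q ∧ p ∉ Q' ∨ p ∉ Q ∧ p ∈ Q' := by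
      by_contra! hcon
      exact h (Finset.ext fun p => by grind)
    have hpU : p ∈ Q ∪ Q' := by grind
    rw [mul_zero]
    refine prod_eq_zero hpU ?_
    rcases hp with ⟨hQ, hQ'⟩ | ⟨hQ, hQ'⟩
    · simpa only [corrFactor, hQ, hQ', if_true, if_false, mul_one]
        using sum_range_ramanujanSum (hprime p hpU).pos a
    · simpa only [corrFactor, hQ, hQ', if_true, if_false, one_mul]
        using sum_range_ramanujanSum (hprime p hpU).pos b

theorem modulus_union_le {Q Q' : Finset ℕ} (hQ : ∀ p ∈ Q, p.Prime) :
    modulus (Q ∪ Q') ≤ modulus Q * modulus Q' := by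
  have h : modulus (Q ∪ Q') * modulus (Q ∩ Q') = modulus Q * modulus Q' := prod_union_inter
  rw [← h]
  exact Nat.le_mul_of_pos_right _ (modulus_pos fun p hp => hQ p (mem_inter.1 hp).1)

theorem abs_sum_range_ramanujanProd_mul_sub_le {Q Q' : Finset ℕ} (hQ : ∀ p ∈ Q, p.Prime)
    (hQ' : ∀ p ∈ Q', p.Prime) {T : ℝ} (hT : modulus Q ≤ T) (hT' : modulus Q' ≤ T) (a b : ℤ)
    (L : ℕ) :
    |∑ n ∈ range L, ramanujanProd Q (a + n) * ramanujanProd Q' (b + n) -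
        L * (if Q = Q' then ramanujanProd Q (a - b) else 0)| ≤ 2 * T ^ 4 := by
  have hprime : ∀ p ∈ Q ∪ Q', p.Prime := fun p hp => (mem_union.1 hp).elim (hQ p) (hQ' p)
  have hT0 : 0 ≤ T := (Nat.cast_nonneg _).trans hT
  have hper : ∀ p ∈ Q ∪ Q', Function.Periodic (corrFactor Q Q' a b p) p :=
    fun p _ => periodic_corrFactor Q Q' a b p
  have hbound : ∀ n : ℕ, |∏ p ∈ Q ∪ Q', corrFactor Q Q' a b p n| ≤ T ^ 2 := fun n => by
    rw [← ramanujanProd_mul_eq_prod_corrFactor, abs_mul, sq]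
    exact mul_le_mul ((abs_ramanujanProd_le hQ _).trans hT)
      ((abs_ramanujanProd_le hQ' _).trans hT') (abs_nonneg _) hT0
  have hmodulus : (modulus (Q ∪ Q') : ℝ) ≤ T ^ 2 :=
    calc (modulus (Q ∪ Q') : ℝ) ≤ modulus Q * modulus Q' := by exact_mod_cast modulus_union_le hQ
      _ ≤ T ^ 2 := by rw [sq]; gcongr
  simp only [ramanujanProd_mul_eq_prod_corrFactor]
  calc _ ≤ 2 * modulus (Q ∪ Q') * T ^ 2 :=
        abs_sum_range_sub_mul_mean_le (modulus_pos hprime) (periodic_finset_prod hper) hbound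
          ((sum_range_modulus_prod hprime hper).trans (prod_sum_range_corrFactor hprime a b)) L
    _ ≤ 2 * T ^ 2 * T ^ 2 := by gcongr
    _ = 2 * T ^ 4 := by ring

end RamanujanSum

section MaximalInequality

/-- The part of `F` lying in the window `(x, x + N]`. -/
def window (N : ℕ) (F : Finset ℤ) (x : ℤ) : Finset ℤ := F.filter fun y => x < y ∧ y ≤ x + N

/-- The average `N⁻¹ ∑_{1 ≤ n ≤ N} u(n) 𝟙_F(x + n)`, written as a sum over `y = x + n`. -/
noncomputable def forwardAvg (u : ℤ → ℝ) (N : ℕ) (F : Finset ℤ) (x : ℤ) : ℝ :=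
  (∑ y ∈ window N F x, u (y - x)) / N

theorem sq_sum_abs_sum_le {ι κ : Type*} (E : Finset ι) {F Y : Finset κ} (hFY : F ⊆ Y)
    (k : ι → κ → ℝ) :
    (∑ x ∈ E, |∑ y ∈ F, k x y|) ^ 2 ≤
      #F * ∑ x ∈ E, ∑ x' ∈ E, |∑ y ∈ Y, k x y * k x' y| := by
  set σ : ι → ℝ := fun x => SignType.sign (∑ y ∈ F, k x y) with hσ
  have hσ_le : ∀ x, |σ x| ≤ 1 := fun x => by
    simp only [hσ]
    rcases SignType.sign (∑ y ∈ F, k x y) with _ | _ | _ <;> simp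
  set g : κ → ℝ := fun y => ∑ x ∈ E, σ x * k x y with hg
  have hdual : ∑ x ∈ E, |∑ y ∈ F, k x y| = ∑ y ∈ F, g y := by
    rw [hg, sum_comm]
    exact sum_congr rfl fun x _ => by rw [← mul_sum, ← sign_mul_self]
  have hexpand : ∑ y ∈ Y, g y ^ 2 =
      ∑ x ∈ E, ∑ x' ∈ E, σ x * σ x' * ∑ y ∈ Y, k x y * k x' y := by
    simp only [hg, sq, sum_mul_sum]
    rw [sum_comm]
    refine sum_congr rfl fun x _ => ?_
    rw [sum_comm]
    simp only [mul_sum]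
    exact sum_congr rfl fun x' _ => sum_congr rfl fun y _ => by ring
  have hterm : ∀ x x', σ x * σ x' * ∑ y ∈ Y, k x y * k x' y ≤ |∑ y ∈ Y, k x y * k x' y| := by
    intro x x'
    refine (le_abs_self _).trans ?_
    rw [abs_mul, abs_mul]
    exact mul_le_of_le_one_left (abs_nonneg _)
      (mul_le_one₀ (hσ_le x) (abs_nonneg _) (hσ_le x'))
  calc (∑ x ∈ E, |∑ y ∈ F, k x y|) ^ 2 ≤ #F * ∑ y ∈ F, g y ^ 2 := by
        rw [hdual]; exact sq_sum_le_card_mul_sum_sq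
    _ ≤ #F * ∑ y ∈ Y, g y ^ 2 := by
        gcongr
    _ ≤ _ := by
        rw [hexpand]
        gcongr
        exact hterm _ _

/-- The function `y ↦ u(y - x) 𝟙_{(x, x + N]}(y)`. -/
def windowKernel (u : ℤ → ℝ) (N : ℕ) (x y : ℤ) : ℝ := if x < y ∧ y ≤ x + N then u (y - x) else 0

variable {u ρ : ℤ → ℝ} {R : ℝ}

theorem forwardAvg_eq_sum_windowKernel (u : ℤ → ℝ) (N : ℕ) (F : Finset ℤ) (x : ℤ) :
    forwardAvg u N F x = ∑ y ∈ F, windowKernel u N x y / N := by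
  rw [forwardAvg, window, sum_filter, sum_div]
  rfl

theorem abs_sum_Ioc_mul_le
    (hcorr : ∀ (a b : ℤ) (L : ℕ), |∑ n ∈ range L, u (a + n) * u (b + n) - L * ρ (a - b)| ≤ R)
    {lo hi : ℤ} {N : ℕ} (hlo : lo ≤ hi) (hN : hi ≤ lo + N) (x x' : ℤ) :
    |∑ y ∈ Ioc lo hi, u (y - x') * u (y - x)| ≤ N * |ρ (x - x')| + R := by
  obtain ⟨L, rfl⟩ := Int.le.dest hlo
  have hsum : ∑ y ∈ Ioc lo (lo + L), u (y - x') * u (y - x) =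
      ∑ n ∈ range L, u (lo + 1 - x' + n) * u (lo + 1 - x + n) := by
    have hIoc : Ioc lo (lo + L) = Ico (lo + 1) (lo + 1 + L) := by
      ext y; simp only [mem_Ioc, mem_Ico]; omega
    rw [hIoc, sum_Ico_int_eq_sum_range]
    exact sum_congr rfl fun n _ => by ring_nf
  have h := hcorr (lo + 1 - x') (lo + 1 - x) L
  rw [← hsum, show lo + 1 - x' - (lo + 1 - x) = x - x' by ring] at h
  have hL : (L : ℝ) ≤ N := by exact_mod_cast (by omega : L ≤ N)
  have hmain : |(L : ℝ) * ρ (x - x')| ≤ N * |ρ (x - x')| := by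
    rw [abs_mul, Nat.abs_cast]; gcongr
  linarith [abs_sub_abs_le_abs_sub (∑ y ∈ Ioc lo (lo + L), u (y - x') * u (y - x))
    (L * ρ (x - x'))]

theorem sum_windowKernel_mul (u : ℤ → ℝ) {Y : Finset ℤ} {x x' : ℤ} {N N' : ℕ}
    (hY : Ioc x (x + N) ⊆ Y) :
    ∑ y ∈ Y, windowKernel u N x y * windowKernel u N' x' y =
      ∑ y ∈ Ioc (max x x') (min (x + N) (x' + N')), u (y - x') * u (y - x) := by
  have hfilter : Ioc (max x x') (min (x + N) (x' + N')) =
      {y ∈ Y | (x < y ∧ y ≤ x + N) ∧ x' < y ∧ y ≤ x' + N'} := by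
    ext y
    have : y ∈ Ioc x (x + N) → y ∈ Y := fun h => hY h
    simp only [mem_Ioc, mem_filter, max_lt_iff, le_min_iff] at this ⊢
    tauto
  rw [hfilter, sum_filter]
  refine sum_congr rfl fun y _ => ?_
  rw [windowKernel, windowKernel, ite_zero_mul_ite_zero, mul_comm]

theorem abs_sum_windowKernel_mul_le (hR : 0 ≤ R)
    (hcorr : ∀ (a b : ℤ) (L : ℕ), |∑ n ∈ range L, u (a + n) * u (b + n) - L * ρ (a - b)| ≤ R)
    {Y : Finset ℤ} {x x' : ℤ} {N N' : ℕ} (hN : N ≤ N') (hY : Ioc x (x + N) ⊆ Y) :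
    |∑ y ∈ Y, windowKernel u N x y * windowKernel u N' x' y| ≤
      if |x - x'| ≤ N' then N * |ρ (x - x')| + R else 0 := by
  rw [sum_windowKernel_mul u hY]
  rcases lt_or_ge (max x x') (min (x + N) (x' + N')) with hlt | hge
  · rw [if_pos (by rw [abs_le]; omega)]
    exact abs_sum_Ioc_mul_le hcorr hlt.le (by omega) x x'
  · rw [Ioc_eq_empty hge.not_gt, sum_empty, abs_zero]
    split_ifs <;> positivity

theorem abs_sum_windowKernel_div_mul_le (hR : 0 ≤ R)
    (hcorr : ∀ (a b : ℤ) (L : ℕ), |∑ n ∈ range L, u (a + n) * u (b + n) - L * ρ (a - b)| ≤ R)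
    {Y : Finset ℤ} {x x' : ℤ} {N₀ N N' : ℕ} (hN₀ : 1 ≤ N₀) (hN₀N : N₀ ≤ N) (hN : N ≤ N')
    (hY : Ioc x (x + N) ⊆ Y) :
    |∑ y ∈ Y, windowKernel u N x y / N * (windowKernel u N' x' y / N')| ≤
      (if |x - x'| ≤ N' then |ρ (x - x')| + R / N₀ else 0) / N' := by
  have hN₀' : (0 : ℝ) < N₀ := by exact_mod_cast hN₀
  have hN₀N' : (N₀ : ℝ) ≤ N := by exact_mod_cast hN₀N
  have hNpos : (0 : ℝ) < N := hN₀'.trans_le hN₀N'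
  simp only [div_mul_div_comm]
  rw [← sum_div, abs_div, abs_mul, Nat.abs_cast, Nat.abs_cast, ← div_div]
  refine div_le_div_of_nonneg_right ?_ (Nat.cast_nonneg _)
  rw [div_le_iff₀ hNpos]
  refine (abs_sum_windowKernel_mul_le hR hcorr hN hY).trans ?_
  split_ifs
  · have : R ≤ R / N₀ * N := by
      rw [div_mul_eq_mul_div, le_div_iff₀ hN₀']
      gcongr
    linarith
  · rw [zero_mul]

theorem sum_ite_abs_sub_le (E : Finset ℤ) (x : ℤ) (N : ℕ) {g : ℤ → ℝ} (hg : ∀ h, 0 ≤ g h) :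
    ∑ y ∈ E, (if |y - x| ≤ N then g (y - x) else 0) ≤ ∑ h ∈ Icc (-(N : ℤ)) N, g h := by
  rw [← sum_filter, ← sum_image (f := g) (g := fun y => y - x) sub_left_injective.injOn]
  refine sum_le_sum_of_subset_of_nonneg (fun h hh => ?_) fun i _ _ => hg i
  obtain ⟨y, hy, rfl⟩ := mem_image.1 hh
  exact mem_Icc.2 (abs_le.1 (mem_filter.1 hy).2)

theorem sum_ite_abs_sub_div_le {S c : ℝ} (hc : 0 ≤ c) {N : ℕ} (hN : 1 ≤ N)
    (hρ : ∑ h ∈ Icc (-(N : ℤ)) N, |ρ h| ≤ N * S) (E : Finset ℤ) (x : ℤ) :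
    (∑ y ∈ E, (if |y - x| ≤ N then |ρ (y - x)| + c else 0)) / N ≤ S + 3 * c := by
  have hN' : (1 : ℝ) ≤ N := by exact_mod_cast hN
  have hcard : (#(Icc (-(N : ℤ)) N) : ℝ) = 2 * N + 1 := by
    rw [Int.card_Icc, show ((N : ℤ) + 1 - -(N : ℤ)).toNat = 2 * N + 1 by omega]
    push_cast; ring
  rw [div_le_iff₀ (by linarith)]
  refine (sum_ite_abs_sub_le E x N fun h => add_nonneg (abs_nonneg (ρ h)) hc).trans ?_
  rw [sum_add_distrib, sum_const, nsmul_eq_mul, hcard]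
  nlinarith

theorem sum_sum_abs_windowKernel_le {S : ℝ} (hR : 0 ≤ R)
    (hcorr : ∀ (a b : ℤ) (L : ℕ), |∑ n ∈ range L, u (a + n) * u (b + n) - L * ρ (a - b)| ≤ R)
    {N₀ : ℕ} (hN₀ : 1 ≤ N₀)
    (hρ : ∀ N : ℕ, N₀ ≤ N → ∑ h ∈ Icc (-(N : ℤ)) N, |ρ h| ≤ N * S)
    {E Y : Finset ℤ} {N : ℤ → ℕ} (hN : ∀ x ∈ E, N₀ ≤ N x) (hY : ∀ x ∈ E, Ioc x (x + N x) ⊆ Y) :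
    ∑ x ∈ E, ∑ x' ∈ E,
      |∑ y ∈ Y, windowKernel u (N x) x y / N x * (windowKernel u (N x') x' y / N x')| ≤
        #E * (2 * (S + 3 * R / N₀)) := by
  set G : ℤ → ℝ := fun h => |ρ h| + R / N₀
  set near : ℤ → ℤ → ℝ := fun x x' => (if |x - x'| ≤ N x' then G (x - x') else 0) / N x'
    with hnear
  have hG0 : ∀ h, 0 ≤ G h := fun h => by positivity
  have hnear0 : ∀ x x', 0 ≤ near x x' := fun x x' =>
    div_nonneg (by have := hG0 (x - x'); split_ifs <;> simp [this]) (Nat.cast_nonneg _)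
  have hpair : ∀ x ∈ E, ∀ x' ∈ E,
      |∑ y ∈ Y, windowKernel u (N x) x y / N x * (windowKernel u (N x') x' y / N x')| ≤
        near x x' + near x' x := by
    intro x hx x' hx'
    rcases le_total (N x) (N x') with hle | hle
    · exact (abs_sum_windowKernel_div_mul_le hR hcorr hN₀ (hN x hx) hle (hY x hx)).trans
        (le_add_of_nonneg_right (hnear0 x' x))
    · simp only [mul_comm (windowKernel u (N x) x _ / _)]
      exact (abs_sum_windowKernel_div_mul_le hR hcorr hN₀ (hN x' hx') hle (hY x' hx')).trans
        (le_add_of_nonneg_left (hnear0 x x'))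
  have hsum_near : ∀ x' ∈ E, ∑ x ∈ E, near x x' ≤ S + 3 * (R / N₀) := fun x' hx' => by
    rw [hnear, ← sum_div]
    exact sum_ite_abs_sub_div_le (by positivity) (hN₀.trans (hN x' hx')) (hρ _ (hN x' hx')) E x'
  calc _ ≤ ∑ x ∈ E, ∑ x' ∈ E, (near x x' + near x' x) :=
        sum_le_sum fun x hx => sum_le_sum fun x' hx' => hpair x hx x' hx'
    _ = 2 * ∑ x' ∈ E, ∑ x ∈ E, near x x' := by
        simp only [sum_add_distrib]
        rw [sum_comm, two_mul]
    _ ≤ 2 * (#E • (S + 3 * (R / N₀))) := by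
        gcongr
        exact sum_le_card_nsmul _ _ _ hsum_near
    _ = #E * (2 * (S + 3 * R / N₀)) := by rw [nsmul_eq_mul]; ring

theorem sq_sum_abs_forwardAvg_le_of_correlation {S : ℝ} (hR : 0 ≤ R)
    (hcorr : ∀ (a b : ℤ) (L : ℕ), |∑ n ∈ range L, u (a + n) * u (b + n) - L * ρ (a - b)| ≤ R)
    {N₀ : ℕ} (hN₀ : 1 ≤ N₀)
    (hρ : ∀ N : ℕ, N₀ ≤ N → ∑ h ∈ Icc (-(N : ℤ)) N, |ρ h| ≤ N * S)
    {E : Finset ℤ} (F : Finset ℤ) {N : ℤ → ℕ} (hN : ∀ x ∈ E, N₀ ≤ N x) :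
    (∑ x ∈ E, |forwardAvg u (N x) F x|) ^ 2 ≤ #F * (#E * (2 * (S + 3 * R / N₀))) := by
  set Y := F ∪ E.biUnion fun x => Ioc x (x + (N x : ℤ))
  have hFY : F ⊆ Y := subset_union_left
  have hY : ∀ x ∈ E, Ioc x (x + (N x : ℤ)) ⊆ Y := fun x hx =>
    (subset_biUnion_of_mem (fun x => Ioc x (x + (N x : ℤ))) hx).trans subset_union_right
  simp only [forwardAvg_eq_sum_windowKernel]
  refine (sq_sum_abs_sum_le E hFY _).trans ?_
  gcongr
  exact sum_sum_abs_windowKernel_le hR hcorr hN₀ hρ hN hY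

end MaximalInequality

section HardyLittlewood

theorem mul_card_le_card_of_forall_mul_le_card_window {α : ℝ} (hα : 0 ≤ α) {N : ℤ → ℕ}
    (E F : Finset ℤ) (hN : ∀ x ∈ E, 1 ≤ N x) (hE : ∀ x ∈ E, α * N x ≤ #(window (N x) F x)) :
    α * #E ≤ #F := by
  induction E using Finset.strongInduction generalizing F with | H E ih =>
  rcases E.eq_empty_or_nonempty with rfl | hne
  · simp
  -- Remove the window of the leftmost point of `E`.
  set x := E.min' hne
  have hx : x ∈ E := E.min'_mem hne
  set E' := {y ∈ E | ¬ y < x + N x}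
  set F' := {y ∈ F | ¬ (x < y ∧ y ≤ x + N x)} with hF'
  have hxN : ¬ ¬ x < x + N x := by have := hN x hx; omega
  have hE'F' : α * #E' ≤ #F' := by
    refine ih E' (filter_ssubset.2 ⟨x, hx, hxN⟩) F' (fun y hy => hN y (mem_filter.1 hy).1)
      fun y hy => ?_
    have hy' := mem_filter.1 hy
    have hsub : window (N y) F y ⊆ window (N y) F' y := fun z hz => by
      simp only [window, mem_filter, hF'] at hz ⊢
      exact ⟨⟨hz.1, by omega⟩, hz.2⟩
    exact (hE y hy'.1).trans (by exact_mod_cast card_le_card hsub)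
  have hnear : #{y ∈ E | y < x + N x} ≤ N x := by
    have hsub : {y ∈ E | y < x + N x} ⊆ Ico x (x + N x) := fun y hy =>
      mem_Ico.2 ⟨E.min'_le y (mem_filter.1 hy).1, (mem_filter.1 hy).2⟩
    simpa using card_le_card hsub
  have hwindow : α * #{y ∈ E | y < x + N x} ≤ #(window (N x) F x) :=
    (by gcongr : α * #{y ∈ E | y < x + N x} ≤ α * N x).trans (hE x hx)
  have hEcard : (#{y ∈ E | y < x + N x} : ℝ) + #E' = #E := by
    exact_mod_cast card_filter_add_card_filter_not _
  have hFcard : (#(window (N x) F x) : ℝ) + #F' = #F := by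
    exact_mod_cast card_filter_add_card_filter_not _
  rw [← hEcard, ← hFcard]
  linarith

end HardyLittlewood

section RamanujanExpansion

/-- The finite Ramanujan expansion `∑_{Q ∈ 𝒬} c_Q c_q(n)`, where `q` runs over the moduli
`∏ p ∈ Q, p`. -/
noncomputable def ramanujanExpansion (𝒬 : Finset (Finset ℕ)) (c : Finset ℕ → ℝ) (n : ℤ) : ℝ :=
  ∑ Q ∈ 𝒬, c Q * ramanujanProd Q n

variable {𝒬 : Finset (Finset ℕ)}

theorem abs_correlation_ramanujanExpansion_sub_le (hprime : ∀ Q ∈ 𝒬, ∀ p ∈ Q, p.Prime) {T : ℝ}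
    (hT : ∀ Q ∈ 𝒬, modulus Q ≤ T) (c : Finset ℕ → ℝ) (a b : ℤ) (L : ℕ) :
    |∑ n ∈ range L, ramanujanExpansion 𝒬 c (a + n) * ramanujanExpansion 𝒬 c (b + n) -
        L * ramanujanExpansion 𝒬 (fun Q => c Q ^ 2) (a - b)| ≤
      (∑ Q ∈ 𝒬, |c Q|) ^ 2 * (2 * T ^ 4) := by
  have hexpand : ∑ n ∈ range L, ramanujanExpansion 𝒬 c (a + n) * ramanujanExpansion 𝒬 c (b + n) =
      ∑ Q ∈ 𝒬, ∑ Q' ∈ 𝒬, c Q * c Q' *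
        ∑ n ∈ range L, ramanujanProd Q (a + n) * ramanujanProd Q' (b + n) := by
    simp only [ramanujanExpansion, sum_mul_sum]
    rw [sum_comm]
    refine sum_congr rfl fun Q _ => ?_
    rw [sum_comm]
    simp only [mul_sum]
    exact sum_congr rfl fun Q' _ => sum_congr rfl fun n _ => by ring
  have hdiag : L * ramanujanExpansion 𝒬 (fun Q => c Q ^ 2) (a - b) =
      ∑ Q ∈ 𝒬, ∑ Q' ∈ 𝒬, c Q * c Q' * (L * (if Q = Q' then ramanujanProd Q (a - b) else 0)) := by
    simp only [ramanujanExpansion, mul_ite, mul_zero, sum_ite_eq, mul_sum]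
    exact sum_congr rfl fun Q hQ => by rw [if_pos hQ]; ring
  rw [hexpand, hdiag, sq, sum_mul_sum, sum_mul]
  simp only [← sum_sub_distrib, ← mul_sub, sum_mul]
  refine (abs_sum_le_sum_abs _ _).trans (sum_le_sum fun Q hQ => ?_)
  refine (abs_sum_le_sum_abs _ _).trans (sum_le_sum fun Q' hQ' => ?_)
  rw [abs_mul, abs_mul]
  gcongr
  exact abs_sum_range_ramanujanProd_mul_sub_le (hprime Q hQ) (hprime Q' hQ') (hT Q hQ) (hT Q' hQ')
    a b L

theorem sum_abs_ramanujanExpansion_le (hprime : ∀ Q ∈ 𝒬, ∀ p ∈ Q, p.Prime) {N : ℕ} (hN : 1 ≤ N)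
    (hmodulus : ∀ Q ∈ 𝒬, modulus Q ≤ N) (c : Finset ℕ → ℝ) :
    ∑ h ∈ Icc (-(N : ℤ)) N, |ramanujanExpansion 𝒬 c h| ≤
      N * (4 * ∑ Q ∈ 𝒬, |c Q| * 2 ^ #Q) := by
  have hN' : (1 : ℝ) ≤ N := by exact_mod_cast hN
  have hIcc : Icc (-(N : ℤ)) N = Ico (-(N : ℤ)) (-(N : ℤ) + (2 * N + 1 : ℕ)) := by
    ext h; simp only [mem_Icc, mem_Ico]; omega
  have hchar : ∀ Q ∈ 𝒬, ∑ h ∈ Icc (-(N : ℤ)) N, |ramanujanProd Q h| ≤ 4 * N * 2 ^ #Q := by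
    intro Q hQ
    rw [hIcc, sum_Ico_int_eq_sum_range]
    refine (sum_range_abs_ramanujanProd_le (hprime Q hQ) _ _).trans ?_
    have : (modulus Q : ℝ) ≤ N := by exact_mod_cast hmodulus Q hQ
    gcongr
    push_cast
    linarith
  calc ∑ h ∈ Icc (-(N : ℤ)) N, |ramanujanExpansion 𝒬 c h|
      ≤ ∑ h ∈ Icc (-(N : ℤ)) N, ∑ Q ∈ 𝒬, |c Q| * |ramanujanProd Q h| := by
        gcongr with h
        exact (abs_sum_le_sum_abs _ _).trans_eq (sum_congr rfl fun Q _ => abs_mul _ _)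
    _ = ∑ Q ∈ 𝒬, |c Q| * ∑ h ∈ Icc (-(N : ℤ)) N, |ramanujanProd Q h| := by
        rw [sum_comm]
        simp only [mul_sum]
    _ ≤ ∑ Q ∈ 𝒬, |c Q| * (4 * N * 2 ^ #Q) := by
        gcongr with Q hQ
        exact hchar Q hQ
    _ = N * (4 * ∑ Q ∈ 𝒬, |c Q| * 2 ^ #Q) := by
        simp only [mul_sum]
        exact sum_congr rfl fun Q _ => by ring

theorem sq_sum_abs_forwardAvg_ramanujanExpansion_le (hprime : ∀ Q ∈ 𝒬, ∀ p ∈ Q, p.Prime)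
    {T N₀ : ℕ} (hT : ∀ Q ∈ 𝒬, modulus Q ≤ T) (hN₀ : 1 ≤ N₀) (hTN₀ : T ≤ N₀)
    (c : Finset ℕ → ℝ) {E : Finset ℤ} (F : Finset ℤ) {N : ℤ → ℕ} (hN : ∀ x ∈ E, N₀ ≤ N x) :
    (∑ x ∈ E, |forwardAvg (ramanujanExpansion 𝒬 c) (N x) F x|) ^ 2 ≤
      #F * (#E * (8 * ∑ Q ∈ 𝒬, c Q ^ 2 * 2 ^ #Q +
        12 * ((∑ Q ∈ 𝒬, |c Q|) ^ 2 * T ^ 4) / N₀)) := by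
  refine (sq_sum_abs_forwardAvg_le_of_correlation (by positivity)
    (abs_correlation_ramanujanExpansion_sub_le hprime (T := T)
      (fun Q hQ => by exact_mod_cast hT Q hQ) c) hN₀
    (fun N hN => sum_abs_ramanujanExpansion_le hprime (hN₀.trans hN)
      (fun Q hQ => (hT Q hQ).trans (hTN₀.trans hN)) _) F hN).trans_eq ?_
  simp only [abs_sq]
  ring

end RamanujanExpansion

section MertensProduct

theorem mem_primesUpTo {N p : ℕ} : p ∈ primesUpTo N ↔ p.Prime ∧ p ≤ N := by
  simp [primesUpTo, and_comm]

theorem primesUpTo_mono : Monotone primesUpTo := fun _ _ h _ hp =>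
  mem_primesUpTo.2 ⟨(mem_primesUpTo.1 hp).1, (mem_primesUpTo.1 hp).2.trans h⟩

theorem two_le_cast_of_prime {p : ℕ} (hp : p.Prime) : (2 : ℝ) ≤ p := by exact_mod_cast hp.two_le

/-- The Mertens product `∏_{p ≤ 2^m} (1 - 1/p)⁻¹`. -/
noncomputable def mertensProd (m : ℕ) : ℝ := ∏ p ∈ primesUpTo (2 ^ m), (p : ℝ) / (p - 1)

theorem one_le_mertensProd (m : ℕ) : 1 ≤ mertensProd m := by
  refine one_le_prod fun p hp => ?_
  have := two_le_cast_of_prime (mem_primesUpTo.1 hp).1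
  rw [one_le_div (by linarith)]
  linarith

theorem primorial_eq_prod_primesUpTo (N : ℕ) : primorial N = ∏ p ∈ primesUpTo N, p := rfl

theorem mul_card_primesUpTo_sdiff_le (i : ℕ) :
    i * #(primesUpTo (2 ^ (i + 1)) \ primesUpTo (2 ^ i)) ≤ 2 * 2 ^ i := by
  set B := primesUpTo (2 ^ (i + 1)) \ primesUpTo (2 ^ i)
  have hsub : primesUpTo (2 ^ i) ⊆ primesUpTo (2 ^ (i + 1)) :=
    primesUpTo_mono (Nat.pow_le_pow_right two_pos i.le_succ)
  have hlower : (2 ^ i) ^ #B ≤ ∏ p ∈ B, p := by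
    refine pow_card_le_prod _ _ _ fun p hp => ?_
    simp only [B, mem_sdiff, mem_primesUpTo] at hp
    exact (not_le.1 fun h => hp.2 ⟨hp.1.1, h⟩).le
  have hupper : primorial (2 ^ (i + 1)) ≤ primorial (2 ^ i) * 2 ^ (2 * 2 ^ i) := by
    rw [pow_succ', two_mul]
    exact (primorial_add_le le_rfl).trans (Nat.mul_le_mul_left _ (Nat.choose_le_two_pow _ _))
  rw [primorial_eq_prod_primesUpTo, primorial_eq_prod_primesUpTo, ← prod_sdiff hsub,
    mul_comm] at hupper
  have hpos : 0 < ∏ p ∈ primesUpTo (2 ^ i), p :=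
    prod_pos fun p hp => (mem_primesUpTo.1 hp).1.pos
  have := hlower.trans (Nat.le_of_mul_le_mul_left hupper hpos)
  rwa [← pow_mul, Nat.pow_le_pow_iff_right one_lt_two] at this

theorem mertensProd_succ_le {i : ℕ} (hi : 1 ≤ i) :
    mertensProd (i + 1) ≤ mertensProd i * Real.exp (2 / i) := by
  set B := primesUpTo (2 ^ (i + 1)) \ primesUpTo (2 ^ i)
  have hi' : (0 : ℝ) < i := by exact_mod_cast hi
  have hsub : primesUpTo (2 ^ i) ⊆ primesUpTo (2 ^ (i + 1)) :=
    primesUpTo_mono (Nat.pow_le_pow_right two_pos i.le_succ)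
  have hB : ∀ p ∈ B, (2 : ℝ) ^ i + 1 ≤ p := fun p hp => by
    simp only [B, mem_sdiff, mem_primesUpTo] at hp
    exact_mod_cast not_le.1 fun h => hp.2 ⟨hp.1.1, h⟩
  have hcard : (i : ℝ) * #B ≤ 2 * 2 ^ i := by exact_mod_cast mul_card_primesUpTo_sdiff_le i
  have hfactor : ∀ p ∈ B, (p : ℝ) / (p - 1) ≤ Real.exp (1 / 2 ^ i) := fun p hp => by
    have hp := hB p hp
    have h2i : (0 : ℝ) < 2 ^ i := by positivity
    calc (p : ℝ) / (p - 1) = 1 / (p - 1) + 1 := by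
          rw [div_add_one (by linarith)]; ring
      _ ≤ 1 / 2 ^ i + 1 := by gcongr; linarith
      _ ≤ Real.exp (1 / 2 ^ i) := Real.add_one_le_exp _
  have hblock : ∏ p ∈ B, (p : ℝ) / (p - 1) ≤ Real.exp (2 / i) := by
    calc ∏ p ∈ B, (p : ℝ) / (p - 1) ≤ ∏ _p ∈ B, Real.exp (1 / 2 ^ i) :=
          prod_le_prod (fun p hp => div_nonneg p.cast_nonneg (by
            linarith [hB p hp, pow_pos (two_pos : (0 : ℝ) < 2) i])) hfactor
      _ = Real.exp (#B * (1 / 2 ^ i)) := by rw [prod_const, ← Real.exp_nat_mul]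
      _ ≤ Real.exp (2 / i) := Real.exp_le_exp.2 (by
          rw [mul_one_div, div_le_div_iff₀ (by positivity) hi']; linarith)
  rw [mertensProd, ← prod_sdiff hsub, mul_comm]
  exact mul_le_mul_of_nonneg_left hblock (zero_le_one.trans (one_le_mertensProd i))

theorem mertensProd_succ_le_exp_harmonic (i : ℕ) :
    mertensProd (i + 1) ≤ 2 * Real.exp (2 * harmonic i) := by
  induction i with
  | zero =>
    have : primesUpTo (2 ^ 1) = {2} := by decide
    rw [mertensProd, this]
    norm_num
  | succ i ih =>
    calc mertensProd (i + 1 + 1) ≤ mertensProd (i + 1) * Real.exp (2 / (i + 1 : ℕ)) :=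
          mertensProd_succ_le (by omega)
      _ ≤ 2 * Real.exp (2 * harmonic i) * Real.exp (2 / (i + 1 : ℕ)) := by gcongr
      _ = 2 * Real.exp (2 * harmonic (i + 1)) := by
          rw [mul_assoc, ← Real.exp_add, harmonic_succ]
          push_cast
          ring_nf

theorem mertensProd_le {m : ℕ} (hm : 1 ≤ m) : mertensProd m ≤ 16 * (m : ℝ) ^ 2 := by
  obtain ⟨i, rfl⟩ := Nat.exists_eq_add_of_le' hm
  have hpos : (0 : ℝ) < (i + 1 : ℕ) := by positivity
  have hharmonic : (harmonic i : ℝ) ≤ 1 + Real.log (i + 1 : ℕ) := by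
    refine (harmonic_le_one_add_log i).trans ?_
    rcases i.eq_zero_or_pos with rfl | hi
    · simp
    · gcongr
      omega
  have hexp_one : Real.exp 1 ^ 2 ≤ 8 := by
    nlinarith [Real.exp_one_lt_d9, Real.exp_pos 1]
  calc mertensProd (i + 1) ≤ 2 * Real.exp (2 * harmonic i) := mertensProd_succ_le_exp_harmonic i
    _ ≤ 2 * Real.exp ((2 : ℕ) * (1 + Real.log (i + 1 : ℕ))) := by
        gcongr 2 * Real.exp ?_
        push_cast at hharmonic ⊢
        linarith
    _ = 2 * (Real.exp 1 ^ 2 * ((i + 1 : ℕ) : ℝ) ^ 2) := by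
        rw [Real.exp_nat_mul, Real.exp_add, Real.exp_log hpos, mul_pow]
    _ ≤ 2 * (8 * ((i + 1 : ℕ) : ℝ) ^ 2) := by gcongr
    _ = 16 * ((i + 1 : ℕ) : ℝ) ^ 2 := by ring

end MertensProduct

section EulerWeight

theorem sum_inv_sq_le_of_forall_lt {s : Finset ℕ} {z : ℕ} (hz : 1 ≤ z) (hs : ∀ n ∈ s, z < n) :
    ∑ n ∈ s, ((n : ℝ) ^ 2)⁻¹ ≤ 1 / z := by
  have hsub : s ⊆ Ioc z (max z (s.sup id)) := fun n hn =>
    mem_Ioc.2 ⟨hs n hn, (le_sup (f := id) hn).trans (le_max_right _ _)⟩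
  calc ∑ n ∈ s, ((n : ℝ) ^ 2)⁻¹ ≤ ∑ n ∈ Ioc z (max z (s.sup id)), ((n : ℝ) ^ 2)⁻¹ :=
        sum_le_sum_of_subset_of_nonneg hsub fun _ _ _ => by positivity
    _ ≤ (z : ℝ)⁻¹ - ((max z (s.sup id) : ℕ) : ℝ)⁻¹ :=
        sum_Ioc_inv_sq_le_sub (by omega) (le_max_left _ _)
    _ ≤ 1 / z := by rw [one_div]; exact sub_le_self _ (by positivity)

theorem sum_powerset_not_subset_prod_le {ι : Type*} [DecidableEq ι] (P A : Finset ι) {g : ι → ℝ}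
    (hg : ∀ i, 0 ≤ g i) :
    ∑ Q ∈ P.powerset with ¬ Q ⊆ A, ∏ i ∈ Q, g i ≤
      Real.exp (∑ i ∈ P, g i) * ∑ i ∈ P \ A, g i := by
  set B := ∑ i ∈ P \ A, g i
  have hinside : ∑ Q ∈ P.powerset with Q ⊆ A, ∏ i ∈ Q, g i = ∏ i ∈ P ∩ A, (1 + g i) := by
    rw [prod_one_add]
    refine sum_congr ?_ fun _ _ => rfl
    ext Q
    simp only [mem_filter, mem_powerset, subset_inter_iff]
  have htotal : ∑ Q ∈ P.powerset, ∏ i ∈ Q, g i =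
      (∏ i ∈ P ∩ A, (1 + g i)) * ∏ i ∈ P \ A, (1 + g i) := by
    rw [← prod_one_add, ← prod_inter_mul_prod_sdiff]
  have hsplit := sum_filter_add_sum_filter_not P.powerset (fun Q => Q ⊆ A)
    fun Q => ∏ i ∈ Q, g i
  have hexp : Real.exp B - 1 ≤ Real.exp B * B := by
    have := mul_le_mul_of_nonneg_left (Real.add_one_le_exp (-B)) (Real.exp_pos B).le
    rw [← Real.exp_add, add_neg_cancel, Real.exp_zero] at this
    linarith
  calc ∑ Q ∈ P.powerset with ¬ Q ⊆ A, ∏ i ∈ Q, g i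
      = (∏ i ∈ P ∩ A, (1 + g i)) * (∏ i ∈ P \ A, (1 + g i) - 1) := by linarith
    _ ≤ Real.exp (∑ i ∈ P ∩ A, g i) * (Real.exp B - 1) := by
        gcongr
        · exact sub_nonneg.2 (one_le_prod fun i _ => le_add_of_nonneg_right (hg i))
        · exact Real.prod_one_add_le_exp_sum _ hg
        · exact Real.prod_one_add_le_exp_sum _ hg
    _ ≤ Real.exp (∑ i ∈ P ∩ A, g i) * (Real.exp B * B) := by gcongr
    _ = Real.exp (∑ i ∈ P, g i) * B := by
        rw [← mul_assoc, ← Real.exp_add, sum_inter_add_sum_sdiff]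

/-- The multiplicative weight `K^ω(q) / q` of the modulus `q = ∏ p ∈ Q, p`. -/
noncomputable def eulerWeight (K : ℝ) (Q : Finset ℕ) : ℝ := ∏ p ∈ Q, K / p

theorem eulerWeight_nonneg {K : ℝ} (hK : 0 ≤ K) (Q : Finset ℕ) : 0 ≤ eulerWeight K Q :=
  prod_nonneg fun p _ => div_nonneg hK p.cast_nonneg

theorem eulerWeight_mono {K K' : ℝ} (hK : 0 ≤ K) (h : K ≤ K') (Q : Finset ℕ) :
    eulerWeight K Q ≤ eulerWeight K' Q :=
  prod_le_prod (fun p _ => div_nonneg hK p.cast_nonneg) fun p _ => by gcongr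

theorem eulerWeight_sq_mul_two_pow_card (K : ℝ) (Q : Finset ℕ) :
    eulerWeight K Q ^ 2 * 2 ^ #Q = ∏ p ∈ Q, 2 * K ^ 2 * ((p : ℝ) ^ 2)⁻¹ := by
  rw [eulerWeight, ← prod_pow, ← prod_const, ← prod_mul_distrib]
  exact prod_congr rfl fun p _ => by ring

variable {P : Finset ℕ}

theorem sum_two_mul_sq_mul_inv_sq_le (hP : ∀ p ∈ P, p.Prime) (K : ℝ) :
    ∑ p ∈ P, 2 * K ^ 2 * ((p : ℝ) ^ 2)⁻¹ ≤ 2 * K ^ 2 := by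
  rw [← mul_sum]
  have := sum_inv_sq_le_of_forall_lt le_rfl fun p hp => (hP p hp).one_lt
  rw [Nat.cast_one, div_one] at this
  exact mul_le_of_le_one_right (by positivity) this

theorem sum_powerset_eulerWeight_sq_le (hP : ∀ p ∈ P, p.Prime) (K : ℝ) :
    ∑ Q ∈ P.powerset, eulerWeight K Q ^ 2 * 2 ^ #Q ≤ Real.exp (2 * K ^ 2) := by
  simp only [eulerWeight_sq_mul_two_pow_card]
  rw [← prod_one_add]
  exact (Real.prod_one_add_le_exp_sum _ fun p => by positivity).trans
    (Real.exp_le_exp.2 (sum_two_mul_sq_mul_inv_sq_le hP K))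

theorem sum_powerset_not_subset_eulerWeight_sq_le (hP : ∀ p ∈ P, p.Prime) (K : ℝ) (m : ℕ) :
    ∑ Q ∈ P.powerset with ¬ Q ⊆ primesUpTo (2 ^ m), eulerWeight K Q ^ 2 * 2 ^ #Q ≤
      2 * K ^ 2 * Real.exp (2 * K ^ 2) / 2 ^ m := by
  simp only [eulerWeight_sq_mul_two_pow_card]
  have hlarge : ∑ p ∈ P \ primesUpTo (2 ^ m), ((p : ℝ) ^ 2)⁻¹ ≤ 1 / (2 ^ m : ℕ) := by
    refine sum_inv_sq_le_of_forall_lt Nat.one_le_two_pow fun p hp => ?_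
    rw [mem_sdiff, mem_primesUpTo] at hp
    exact not_le.1 fun h => hp.2 ⟨hP p hp.1, h⟩
  push_cast at hlarge
  have hlarge' : ∑ p ∈ P \ primesUpTo (2 ^ m), 2 * K ^ 2 * ((p : ℝ) ^ 2)⁻¹ ≤
      2 * K ^ 2 * (1 / 2 ^ m) := by
    rw [← mul_sum]
    gcongr
  calc _ ≤ Real.exp (∑ p ∈ P, 2 * K ^ 2 * ((p : ℝ) ^ 2)⁻¹) *
        ∑ p ∈ P \ primesUpTo (2 ^ m), 2 * K ^ 2 * ((p : ℝ) ^ 2)⁻¹ :=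
        sum_powerset_not_subset_prod_le _ _ fun p => by positivity
    _ ≤ Real.exp (2 * K ^ 2) * (2 * K ^ 2 * (1 / 2 ^ m)) := by
        gcongr
        exact sum_two_mul_sq_mul_inv_sq_le hP K
    _ = 2 * K ^ 2 * Real.exp (2 * K ^ 2) / 2 ^ m := by ring

end EulerWeight

section MaximalInequalityForRamanujanExpansions

theorem card_le_of_forall_modulus_le {𝒬 : Finset (Finset ℕ)} (hprime : ∀ Q ∈ 𝒬, ∀ p ∈ Q, p.Prime)
    {T : ℕ} (hT : ∀ Q ∈ 𝒬, modulus Q ≤ T) : #𝒬 ≤ T := by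
  have hinj : Set.InjOn modulus 𝒬 := fun Q hQ Q' hQ' h => by
    rw [← Nat.primeFactors_prod (hprime Q hQ), ← Nat.primeFactors_prod (hprime Q' hQ')]
    exact congrArg Nat.primeFactors h
  have hmaps : Set.MapsTo modulus 𝒬 (Icc 1 T) := fun Q hQ => by
    rw [coe_Icc]
    exact ⟨modulus_pos (hprime Q hQ), hT Q hQ⟩
  simpa using card_le_card_of_injOn modulus hmaps hinj

theorem eulerWeight_eight_le_modulus_sq {Q : Finset ℕ} (hQ : ∀ p ∈ Q, p.Prime) :
    eulerWeight 8 Q ≤ (modulus Q : ℝ) ^ 2 := by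
  rw [eulerWeight, modulus, Nat.cast_prod, ← prod_pow]
  refine prod_le_prod (fun p _ => by positivity) fun p hp => ?_
  have h2 := two_le_cast_of_prime (hQ p hp)
  rw [div_le_iff₀ (by linarith), ← pow_succ]
  calc (8 : ℝ) = 2 ^ 3 := by norm_num
    _ ≤ (p : ℝ) ^ 3 := by gcongr

variable {𝒬 : Finset (Finset ℕ)} {c : Finset ℕ → ℝ} {D : ℝ} {m : ℕ}

theorem sum_sq_mul_two_pow_card_le (hprime : ∀ Q ∈ 𝒬, ∀ p ∈ Q, p.Prime) (hD : 0 ≤ D) {K : ℝ}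
    (hc : ∀ Q ∈ 𝒬, c Q ^ 2 ≤
      D * eulerWeight K Q ^ 2 * (if Q ⊆ primesUpTo (2 ^ m) then 1 / 2 ^ m else 1)) :
    ∑ Q ∈ 𝒬, c Q ^ 2 * 2 ^ #Q ≤ D * ((1 + 2 * K ^ 2) * Real.exp (2 * K ^ 2)) / 2 ^ m := by
  set P := 𝒬.biUnion id
  have hP : ∀ p ∈ P, p.Prime := fun p hp => by
    obtain ⟨Q, hQ, hpQ⟩ := mem_biUnion.1 hp
    exact hprime Q hQ p hpQ
  have h𝒬P : 𝒬 ⊆ P.powerset := fun Q hQ => mem_powerset.2 (subset_biUnion_of_mem id hQ)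
  set w : Finset ℕ → ℝ := fun Q => eulerWeight K Q ^ 2 * 2 ^ #Q
  have hw : ∀ Q, 0 ≤ w Q := fun Q => by positivity
  calc ∑ Q ∈ 𝒬, c Q ^ 2 * 2 ^ #Q
      ≤ ∑ Q ∈ 𝒬, D * (if Q ⊆ primesUpTo (2 ^ m) then w Q / 2 ^ m else w Q) := by
        refine sum_le_sum fun Q hQ =>
          (mul_le_mul_of_nonneg_right (hc Q hQ) (by positivity)).trans_eq ?_
        split_ifs <;> ring
    _ ≤ ∑ Q ∈ P.powerset, D * (if Q ⊆ primesUpTo (2 ^ m) then w Q / 2 ^ m else w Q) := by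
        refine sum_le_sum_of_subset_of_nonneg h𝒬P fun Q _ _ => mul_nonneg hD ?_
        have := hw Q
        split_ifs <;> positivity
    _ = D * ((∑ Q ∈ P.powerset with Q ⊆ primesUpTo (2 ^ m), w Q) / 2 ^ m +
          ∑ Q ∈ P.powerset with ¬ Q ⊆ primesUpTo (2 ^ m), w Q) := by
        rw [← mul_sum, sum_ite, sum_div]
    _ ≤ D * (Real.exp (2 * K ^ 2) / 2 ^ m + 2 * K ^ 2 * Real.exp (2 * K ^ 2) / 2 ^ m) := by
        gcongr
        · exact (sum_le_sum_of_subset_of_nonneg (filter_subset _ _) fun Q _ _ => hw Q).trans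
            (sum_powerset_eulerWeight_sq_le hP K)
        · exact sum_powerset_not_subset_eulerWeight_sq_le hP K m
    _ = D * ((1 + 2 * K ^ 2) * Real.exp (2 * K ^ 2)) / 2 ^ m := by ring

theorem sq_sum_abs_le (hprime : ∀ Q ∈ 𝒬, ∀ p ∈ Q, p.Prime) (hD : 0 ≤ D) {T : ℕ}
    (hT : ∀ Q ∈ 𝒬, modulus Q ≤ T) (hc : ∀ Q ∈ 𝒬, c Q ^ 2 ≤ D * eulerWeight 8 Q ^ 2) :
    (∑ Q ∈ 𝒬, |c Q|) ^ 2 ≤ D * T ^ 6 := by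
  have hcard : (#𝒬 : ℝ) ≤ T := by exact_mod_cast card_le_of_forall_modulus_le hprime hT
  have hterm : ∀ Q ∈ 𝒬, |c Q| ^ 2 ≤ D * T ^ 4 := fun Q hQ => by
    have hweight : eulerWeight 8 Q ≤ (T : ℝ) ^ 2 :=
      (eulerWeight_eight_le_modulus_sq (hprime Q hQ)).trans (by
        gcongr
        exact hT Q hQ)
    have := eulerWeight_nonneg (by norm_num : (0 : ℝ) ≤ 8) Q
    calc |c Q| ^ 2 ≤ D * eulerWeight 8 Q ^ 2 := by rw [sq_abs]; exact hc Q hQ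
      _ ≤ D * ((T : ℝ) ^ 2) ^ 2 := by gcongr
      _ = D * T ^ 4 := by ring
  calc (∑ Q ∈ 𝒬, |c Q|) ^ 2 ≤ #𝒬 * ∑ Q ∈ 𝒬, |c Q| ^ 2 := sq_sum_le_card_mul_sum_sq
    _ ≤ #𝒬 * (#𝒬 * (D * T ^ 4)) := by
        gcongr
        rw [← nsmul_eq_mul]
        exact sum_le_card_nsmul _ _ _ hterm
    _ ≤ T * (T * (D * T ^ 4)) := by gcongr
    _ = D * T ^ 6 := by ring

/-- The constant in the maximal inequality for Ramanujan expansions. -/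
noncomputable def maximalConst : ℝ := 8 * ((1 + 2 * 8 ^ 2) * Real.exp (2 * 8 ^ 2)) + 12

theorem maximalConst_pos : 0 < maximalConst := by unfold maximalConst; positivity

theorem sq_sum_abs_forwardAvg_le (hprime : ∀ Q ∈ 𝒬, ∀ p ∈ Q, p.Prime)
    (hmodulus : ∀ Q ∈ 𝒬, modulus Q ≤ 2 ^ (8 * m ^ 2)) (hD : 0 ≤ D)
    (hc : ∀ Q ∈ 𝒬, c Q ^ 2 ≤
      D * eulerWeight 8 Q ^ 2 * (if Q ⊆ primesUpTo (2 ^ m) then 1 / 2 ^ m else 1))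
    {E : Finset ℤ} (F : Finset ℤ) {N : ℤ → ℕ} (hN : ∀ x ∈ E, 2 ^ (88 * m ^ 2) ≤ N x) :
    (∑ x ∈ E, |forwardAvg (ramanujanExpansion 𝒬 c) (N x) F x|) ^ 2 ≤
      #F * #E * (D * maximalConst / 2 ^ m) := by
  set T : ℕ := 2 ^ (8 * m ^ 2) with hT
  have hTpos : (0 : ℝ) < T := by positivity
  have hN₀ : T ^ 10 * 2 ^ m ≤ 2 ^ (88 * m ^ 2) := by
    rw [hT, ← pow_mul, ← pow_add]
    exact Nat.pow_le_pow_right two_pos (by nlinarith [Nat.le_self_pow two_ne_zero m])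
  have hmax := sq_sum_abs_forwardAvg_ramanujanExpansion_le hprime hmodulus
    (Nat.succ_le_of_lt (by positivity))
    ((Nat.le_self_pow (by norm_num) T).trans (Nat.le_mul_of_pos_right _ (by positivity)))
    c F fun x hx => hN₀.trans (hN x hx)
  have hc' : ∀ Q ∈ 𝒬, c Q ^ 2 ≤ D * eulerWeight 8 Q ^ 2 := fun Q hQ =>
    (hc Q hQ).trans (mul_le_of_le_one_right (by positivity) (by
      split_ifs
      · exact div_le_one_of_le₀ (one_le_pow₀ one_le_two) (by positivity)
      · exact le_rfl))
  have herror : 12 * ((∑ Q ∈ 𝒬, |c Q|) ^ 2 * (T : ℝ) ^ 4) / (T ^ 10 * 2 ^ m : ℕ) ≤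
      12 * D / 2 ^ m := by
    push_cast
    rw [div_le_div_iff₀ (by positivity) (by positivity)]
    calc _ ≤ 12 * (D * T ^ 6 * (T : ℝ) ^ 4) * 2 ^ m := by
          gcongr
          exact sq_sum_abs_le hprime hD hmodulus hc'
      _ = 12 * D * (T ^ 10 * 2 ^ m) := by ring
  rw [mul_assoc]
  refine hmax.trans ?_
  gcongr
  calc _ ≤ 8 * (D * ((1 + 2 * 8 ^ 2) * Real.exp (2 * 8 ^ 2)) / 2 ^ m) + 12 * D / 2 ^ m := by
        gcongr
        exact sum_sq_mul_two_pow_card_le hprime hD hc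
    _ = D * maximalConst / 2 ^ m := by unfold maximalConst; ring

end MaximalInequalityForRamanujanExpansions

section MaximalDecay

/-- The family `W m` obeys the `L²`-type maximal inequality, with gain `2 ^ (-m)`, for averages at
scales at least `2 ^ (88 m²)`. The function `N` linearizes the supremum over the scales. -/
def MaximalDecay (W : ℕ → ℤ → ℝ) : Prop :=
  ∃ C : ℝ, 0 < C ∧ ∀ m, 1 ≤ m → ∀ (E F : Finset ℤ) (N : ℤ → ℕ),
    (∀ x ∈ E, 2 ^ (88 * m ^ 2) ≤ N x) →
      (∑ x ∈ E, |forwardAvg (W m) (N x) F x|) ^ 2 ≤ #F * #E * (C / 2 ^ m)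

theorem maximalDecay_of_ramanujanExpansion {W : ℕ → ℤ → ℝ} {𝒬 : ℕ → Finset (Finset ℕ)}
    {c : ℕ → Finset ℕ → ℝ} {D : ℝ} (hD : 0 < D)
    (hW : ∀ m n, W m n = ramanujanExpansion (𝒬 m) (c m) n)
    (hprime : ∀ m, ∀ Q ∈ 𝒬 m, ∀ p ∈ Q, p.Prime)
    (hmodulus : ∀ m, 1 ≤ m → ∀ Q ∈ 𝒬 m, modulus Q ≤ 2 ^ (8 * m ^ 2))
    (hc : ∀ m, 1 ≤ m → ∀ Q ∈ 𝒬 m, c m Q ^ 2 ≤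
      D * eulerWeight 8 Q ^ 2 * (if Q ⊆ primesUpTo (2 ^ m) then 1 / 2 ^ m else 1)) :
    MaximalDecay W := by
  refine ⟨D * maximalConst, mul_pos hD maximalConst_pos, fun m hm E F N hN => ?_⟩
  rw [funext (hW m)]
  exact sq_sum_abs_forwardAvg_le (hprime m) (hmodulus m hm) hD.le (hc m hm) F hN

end MaximalDecay

section DivisorSums

/-- The divisor sum `∑ a_d 𝟙[d ∣ n]` over the squarefree `d` composed of primes in `P`, the divisor
`d = ∏ p ∈ A, p` being encoded by its set `A` of prime factors. -/
noncomputable def divisorSum (P : Finset ℕ) (a : Finset ℕ → ℝ) (n : ℤ) : ℝ :=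
  ∑ A ∈ P.powerset, a A * if ∀ p ∈ A, (p : ℤ) ∣ n then 1 else 0

/-- The coefficient `∑_{q ∣ d} a_d / d` of the Ramanujan sum `c_q` in the expansion of the divisor
sum with coefficients `a`, where `q = ∏ p ∈ Q, p`. -/
noncomputable def ramanujanCoeff (P : Finset ℕ) (a : Finset ℕ → ℝ) (Q : Finset ℕ) : ℝ :=
  ∑ A ∈ Icc Q P, a A / modulus A

/-- The primes of `P` dividing `n`. -/
def primeDivisorsIn (P : Finset ℕ) (n : ℤ) : Finset ℕ := {p ∈ P | ((p : ℕ) : ℤ) ∣ n}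

variable {P : Finset ℕ} {a : Finset ℕ → ℝ} {r : ℕ}

theorem ite_forall_dvd_eq_sum_ramanujanProd {A : Finset ℕ} (hA : ∀ p ∈ A, p.Prime) (n : ℤ) :
    (if ∀ p ∈ A, (p : ℤ) ∣ n then (1 : ℝ) else 0) =
      ∑ Q ∈ A.powerset, ramanujanProd Q n / modulus A := by
  have hfactor : ∀ p ∈ A, (if (p : ℤ) ∣ n then (1 : ℝ) else 0) = (1 + ramanujanSum p n) / p :=
    fun p hp => by
      have : (p : ℝ) ≠ 0 := Nat.cast_ne_zero.2 (hA p hp).ne_zero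
      rw [ramanujanSum_eq]
      field_simp
      ring
  simp only [← sum_div, ramanujanProd, modulus]
  rw [← prod_one_add, Nat.cast_prod, ← prod_div_distrib, ← prod_congr rfl hfactor,
    prod_ite_zero, prod_const_one]

theorem ramanujanCoeff_eq_zero_of_not_subset {Q : Finset ℕ} (h : ¬ Q ⊆ P) :
    ramanujanCoeff P a Q = 0 := by
  rw [ramanujanCoeff, Icc_eq_empty h, sum_empty]

theorem ramanujanCoeff_eq_zero_of_lt_card (ha : ∀ A, r < #A → a A = 0) {Q : Finset ℕ}
    (h : r < #Q) : ramanujanCoeff P a Q = 0 :=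
  sum_eq_zero fun A hA => by
    rw [ha A (h.trans_le (card_le_card (mem_Icc.1 hA).1)), zero_div]

theorem divisorSum_eq_ramanujanExpansion_powerset (hP : ∀ p ∈ P, p.Prime) (a : Finset ℕ → ℝ)
    (n : ℤ) : divisorSum P a n = ramanujanExpansion P.powerset (ramanujanCoeff P a) n := by
  have hterm : ∀ A ∈ P.powerset, (a A * if ∀ p ∈ A, (p : ℤ) ∣ n then 1 else 0) =
      ∑ Q ∈ A.powerset, a A / modulus A * ramanujanProd Q n := fun A hA => by
    rw [ite_forall_dvd_eq_sum_ramanujanProd (fun p hp => hP p (mem_powerset.1 hA hp)), mul_sum]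
    exact sum_congr rfl fun Q _ => by ring
  rw [divisorSum, sum_congr rfl hterm]
  simp only [ramanujanExpansion, ramanujanCoeff, sum_mul]
  refine sum_comm' fun A Q => ?_
  simp only [mem_powerset, mem_Icc]
  exact ⟨fun h => ⟨⟨h.2, h.1⟩, h.2.trans h.1⟩, fun h => ⟨h.1.2, h.1.1⟩⟩

theorem divisorSum_eq_ramanujanExpansion (hP : ∀ p ∈ P, p.Prime) (ha : ∀ A, r < #A → a A = 0)
    {𝒬 : Finset (Finset ℕ)} (h𝒬 : ∀ Q ⊆ P, #Q ≤ r → Q ∈ 𝒬) (n : ℤ) :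
    divisorSum P a n = ramanujanExpansion 𝒬 (ramanujanCoeff P a) n := by
  rw [divisorSum_eq_ramanujanExpansion_powerset hP]
  refine sum_congr_of_eq_on_inter (fun Q hQ hQ' => ?_) (fun Q _ hQ => ?_) fun _ _ _ => rfl
  · rw [ramanujanCoeff_eq_zero_of_lt_card ha, zero_mul]
    exact not_le.1 fun h => hQ' (h𝒬 Q (mem_powerset.1 hQ) h)
  · rw [ramanujanCoeff_eq_zero_of_not_subset fun h => hQ (mem_powerset.2 h), zero_mul]

theorem divisorSum_card_eq_sum_choose {f : ℕ → ℝ} (hf : ∀ k, r ≤ k → f k = 0) (P : Finset ℕ)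
    (n : ℤ) : divisorSum P (fun A => f #A) n =
      ∑ k ∈ range r, (#(primeDivisorsIn P n)).choose k * f k := by
  set D := primeDivisorsIn P n
  have hdvd : ∀ A ∈ P.powerset, (∀ p ∈ A, (p : ℤ) ∣ n) ↔ A ∈ D.powerset := fun A hA => by
    rw [mem_powerset] at hA ⊢
    exact ⟨fun h p hp => mem_filter.2 ⟨hA hp, h p hp⟩, fun h p hp => (mem_filter.1 (h hp)).2⟩
  calc divisorSum P (fun A => f #A) n = ∑ A ∈ D.powerset, f #A := by
        refine sum_congr_of_eq_on_inter (fun A hA hA' => ?_) (fun A hA hA' => ?_)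
          fun A hA hA' => ?_
        · rw [if_neg ((hdvd A hA).not.2 hA'), mul_zero]
        · exact absurd (powerset_mono.2 (filter_subset _ _) hA) hA'
        · rw [if_pos ((hdvd A hA).2 hA'), mul_one]
    _ = ∑ k ∈ range (#D + 1), (#D).choose k * f k := by
        simp only [sum_powerset_apply_card, nsmul_eq_mul]
    _ = ∑ k ∈ range r, (#D).choose k * f k := by
        refine sum_congr_of_eq_on_inter (fun k _ hk => ?_) (fun k _ hk => ?_) fun _ _ _ => rfl
        · rw [hf k (by simpa using hk), mul_zero]
        · rw [Nat.choose_eq_zero_of_lt (by simpa using hk), Nat.cast_zero, zero_mul]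

theorem sum_Icc_prod {α R : Type*} [DecidableEq α] [CommSemiring R] {P Q : Finset α} (h : Q ⊆ P)
    (g : α → R) :
    ∑ A ∈ Icc Q P, ∏ p ∈ A, g p = (∏ p ∈ Q, g p) * ∏ p ∈ P \ Q, (1 + g p) := by
  have hdisj : ∀ B ∈ (P \ Q).powerset, Disjoint Q B := fun B hB =>
    disjoint_of_subset_right (mem_powerset.1 hB) disjoint_sdiff
  rw [Icc_eq_image_powerset h, sum_image, prod_one_add, mul_sum]
  · exact sum_congr rfl fun B hB => prod_union (hdisj B hB)
  · intro B hB B' hB' heq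
    rw [← union_sdiff_cancel_left (hdisj B hB), ← union_sdiff_cancel_left (hdisj B' hB')]
    exact congrArg (· \ Q) heq

end DivisorSums

section BrunSieve

/-- The coefficients of Brun's truncation of the Möbius sum `∑_{d ∣ n} μ(d)` to divisors with at
most `m` prime factors, normalised by the Mertens product so that the weight has mean about `1`. -/
noncomputable def brunSieve (m : ℕ) (A : Finset ℕ) : ℝ :=
  if #A ≤ m then mertensProd m * (-1) ^ #A else 0

/-- The coefficients of the first neglected layer, divisors with exactly `m + 1` prime factors. -/
noncomputable def brunRemainder (m : ℕ) (A : Finset ℕ) : ℝ :=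
  if #A = m + 1 then mertensProd m else 0

/-- Brun's weight for the integers free of prime factors `≤ 2 ^ m`. -/
noncomputable def brunWeight (m : ℕ) : ℤ → ℝ := divisorSum (primesUpTo (2 ^ m)) (brunSieve m)

/-- The pointwise error term in Brun's upper bound sieve. -/
noncomputable def brunError (m : ℕ) : ℤ → ℝ := divisorSum (primesUpTo (2 ^ m)) (brunRemainder m)

theorem prime_of_mem_primesUpTo {N p : ℕ} (h : p ∈ primesUpTo N) : p.Prime := (mem_primesUpTo.1 h).1

theorem brunSieve_eq_zero {m : ℕ} (A : Finset ℕ) (h : m < #A) : brunSieve m A = 0 :=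
  if_neg (not_le.2 h)

theorem brunRemainder_eq_zero {m : ℕ} (A : Finset ℕ) (h : m + 1 < #A) : brunRemainder m A = 0 :=
  if_neg h.ne'

theorem brunWeight_eq (m : ℕ) (n : ℤ) : brunWeight m n = mertensProd m *
    (∑ k ∈ range (m + 1),
      (-1) ^ k * (#(primeDivisorsIn (primesUpTo (2 ^ m)) n)).choose k : ℤ) := by
  unfold brunWeight brunSieve
  rw [divisorSum_card_eq_sum_choose (r := m + 1)
    (f := fun k => if k ≤ m then mertensProd m * (-1) ^ k else 0) fun k hk => if_neg (by omega)]
  push_cast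
  rw [mul_sum]
  refine sum_congr rfl fun k hk => ?_
  rw [if_pos (Nat.lt_succ_iff.1 (mem_range.1 hk))]
  ring

theorem brunError_eq (m : ℕ) (n : ℤ) : brunError m n =
    mertensProd m * (#(primeDivisorsIn (primesUpTo (2 ^ m)) n)).choose (m + 1) := by
  unfold brunError brunRemainder
  rw [divisorSum_card_eq_sum_choose (r := m + 2)
    (f := fun k => if k = m + 1 then mertensProd m else 0) fun k hk => if_neg (by omega)]
  simp only [mul_ite, mul_zero, sum_ite_eq', mem_range]
  rw [if_pos (by omega), mul_comm]

theorem sum_neg_one_pow_mul_zero_choose (m : ℕ) :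
    ∑ k ∈ range (m + 1), (-1 : ℤ) ^ k * (Nat.choose 0 k : ℤ) = 1 := by
  rw [sum_range_succ']
  simp

theorem brunWeight_of_forall_not_dvd {m : ℕ} {n : ℤ}
    (h : ∀ p ∈ primesUpTo (2 ^ m), ¬ (p : ℤ) ∣ n) : brunWeight m n = mertensProd m := by
  rw [brunWeight_eq, primeDivisorsIn, filter_eq_empty_iff.2 fun p => h p, card_empty,
    sum_neg_one_pow_mul_zero_choose, Int.cast_one, mul_one]

/-- Brun's sieve inequality, from the closed form of the truncated alternating binomial sum. -/
theorem brunWeight_mem_Icc {m : ℕ} (hm : Even m) (n : ℤ) :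
    brunWeight m n ∈ Set.Icc 0 (mertensProd m + brunError m n) := by
  have hV := zero_le_one.trans (one_le_mertensProd m)
  rw [brunWeight_eq, brunError_eq, ← mul_one_add]
  rcases #(primeDivisorsIn (primesUpTo (2 ^ m)) n) with _ | t
  · rw [sum_neg_one_pow_mul_zero_choose]
    simpa using hV
  · rw [Int.alternating_sum_range_choose_eq_choose, hm.neg_one_pow, one_mul, Int.cast_natCast]
    refine ⟨by positivity, mul_le_mul_of_nonneg_left ?_ hV⟩
    rw [Nat.choose_succ_succ, Nat.cast_add]
    linarith [(t.choose (m + 1)).cast_nonneg (α := ℝ)]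

end BrunSieve

section BrunCoefficients

/-- The Euler totient `φ(q) = ∏_{p ∣ q} (p - 1)` of the squarefree modulus `q = ∏ p ∈ Q, p`. -/
noncomputable def totientProd (Q : Finset ℕ) : ℝ := ∏ p ∈ Q, ((p : ℝ) - 1)

theorem totientProd_pos {Q : Finset ℕ} (hQ : ∀ p ∈ Q, p.Prime) : 0 < totientProd Q :=
  prod_pos fun p hp => by linarith [two_le_cast_of_prime (hQ p hp)]

theorem inv_totientProd_le {Q : Finset ℕ} (hQ : ∀ p ∈ Q, p.Prime) :
    (totientProd Q)⁻¹ ≤ eulerWeight 2 Q := by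
  rw [totientProd, ← prod_inv_distrib]
  have hp2 : ∀ p ∈ Q, (2 : ℝ) ≤ p := fun p hp => two_le_cast_of_prime (hQ p hp)
  refine prod_le_prod (fun p hp => inv_nonneg.2 (by linarith [hp2 p hp])) fun p hp => ?_
  have := hp2 p hp
  rw [inv_eq_one_div, div_le_div_iff₀ (by linarith) (by linarith)]
  linarith

theorem inv_modulus_eq_prod (A : Finset ℕ) : (modulus A : ℝ)⁻¹ = ∏ p ∈ A, (p : ℝ)⁻¹ := by
  rw [modulus, Nat.cast_prod, prod_inv_distrib]

variable {m : ℕ} {Q : Finset ℕ}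

theorem prod_one_add_two_div_le (hQ : Q ⊆ primesUpTo (2 ^ m)) :
    ∏ p ∈ primesUpTo (2 ^ m) \ Q, (1 + 2 / (p : ℝ)) ≤ mertensProd m ^ 2 := by
  have hp2 : ∀ p ∈ primesUpTo (2 ^ m), (2 : ℝ) ≤ p := fun p hp =>
    two_le_cast_of_prime (prime_of_mem_primesUpTo hp)
  have hfactor : ∀ p ∈ primesUpTo (2 ^ m) \ Q,
      1 + 2 / (p : ℝ) ≤ ((p : ℝ) / (p - 1)) ^ 2 := fun p hp => by
    have := hp2 p (mem_sdiff.1 hp).1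
    have hinv : 1 + 1 / (p : ℝ) ≤ p / (p - 1) := by
      rw [le_div_iff₀ (by linarith), one_add_mul, one_div_mul_eq_div,
        ← le_sub_iff_add_le', div_le_iff₀ (by linarith)]
      linarith
    calc 1 + 2 / (p : ℝ) ≤ (1 + 1 / (p : ℝ)) ^ 2 := by
          rw [add_sq, ← sub_nonneg]
          ring_nf
          positivity
      _ ≤ ((p : ℝ) / (p - 1)) ^ 2 := by gcongr
  rw [mertensProd, ← prod_pow, ← prod_sdiff hQ]
  refine (prod_le_prod (fun p _ => by positivity) hfactor).trans
    (le_mul_of_one_le_right (prod_nonneg fun p _ => by positivity)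
      (one_le_prod fun p hp => one_le_pow₀ ?_))
  have := hp2 p (hQ hp)
  rw [one_le_div (by linarith)]
  linarith

/-- The size of Brun's truncation error in the Ramanujan coefficients. -/
noncomputable def brunTail (m : ℕ) : ℝ := mertensProd m ^ 3 / 2 ^ m

theorem brunTail_nonneg (m : ℕ) : 0 ≤ brunTail m := by
  have := one_le_mertensProd m
  unfold brunTail
  positivity

/-- Rankin's trick: `𝟙[#A > m] ≤ 2 ^ (#A - m)`. -/
theorem mertensProd_mul_sum_lt_card_le (hQ : Q ⊆ primesUpTo (2 ^ m)) :
    mertensProd m * ∑ A ∈ Icc Q (primesUpTo (2 ^ m)) with m < #A, (modulus A : ℝ)⁻¹ ≤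
      brunTail m * eulerWeight 2 Q := by
  have hV := one_le_mertensProd m
  have hrankin : ∀ A ∈ Icc Q (primesUpTo (2 ^ m)),
      (if m < #A then (modulus A : ℝ)⁻¹ else 0) ≤ (∏ p ∈ A, 2 / (p : ℝ)) / 2 ^ m := fun A _ => by
    have hprod : ∏ p ∈ A, 2 / (p : ℝ) = (modulus A : ℝ)⁻¹ * 2 ^ #A := by
      rw [inv_modulus_eq_prod, ← prod_const, ← prod_mul_distrib]
      exact prod_congr rfl fun p _ => by ring
    rw [hprod]
    split_ifs with h
    · rw [mul_div_assoc]
      refine le_mul_of_one_le_right (by positivity) ?_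
      rw [one_le_div (by positivity)]
      exact pow_le_pow_right₀ one_le_two h.le
    · positivity
  have hweight := eulerWeight_nonneg zero_le_two Q
  calc mertensProd m * ∑ A ∈ Icc Q (primesUpTo (2 ^ m)) with m < #A, (modulus A : ℝ)⁻¹
      ≤ mertensProd m * ∑ A ∈ Icc Q (primesUpTo (2 ^ m)), (∏ p ∈ A, 2 / (p : ℝ)) / 2 ^ m := by
        rw [sum_filter]
        gcongr with A hA
        exact hrankin A hA
    _ = mertensProd m * ((eulerWeight 2 Q *
          ∏ p ∈ primesUpTo (2 ^ m) \ Q, (1 + 2 / (p : ℝ))) / 2 ^ m) := by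
        rw [← sum_div, sum_Icc_prod hQ, eulerWeight]
    _ ≤ mertensProd m * (eulerWeight 2 Q * mertensProd m ^ 2 / 2 ^ m) := by
        gcongr
        exact prod_one_add_two_div_le hQ
    _ = brunTail m * eulerWeight 2 Q := by
        unfold brunTail
        ring

theorem abs_ramanujanCoeff_brunRemainder_le (hQ : Q ⊆ primesUpTo (2 ^ m)) :
    |ramanujanCoeff (primesUpTo (2 ^ m)) (brunRemainder m) Q| ≤ brunTail m * eulerWeight 2 Q := by
  have hV := one_le_mertensProd m
  refine le_trans ?_ (mertensProd_mul_sum_lt_card_le hQ)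
  rw [ramanujanCoeff, sum_filter, mul_sum]
  refine (abs_sum_le_sum_abs _ _).trans (sum_le_sum fun A _ => ?_)
  unfold brunRemainder
  split_ifs with h h' h'
  · rw [div_eq_mul_inv, abs_of_nonneg (by positivity)]
  · omega
  · rw [zero_div, abs_zero]
    positivity
  · simp only [zero_div, abs_zero, mul_zero, le_refl]

theorem sum_Icc_mertensProd_mul_neg_one_pow (hQ : Q ⊆ primesUpTo (2 ^ m)) :
    ∑ A ∈ Icc Q (primesUpTo (2 ^ m)), mertensProd m * (-1) ^ #A / modulus A =
      (-1) ^ #Q / totientProd Q := by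
  have hp2 : ∀ p ∈ primesUpTo (2 ^ m), (2 : ℝ) ≤ p := fun p hp =>
    two_le_cast_of_prime (prime_of_mem_primesUpTo hp)
  have hterm : ∀ A, mertensProd m * (-1) ^ #A / modulus A =
      mertensProd m * ∏ p ∈ A, -(p : ℝ)⁻¹ := fun A => by
    rw [mul_div_assoc, prod_neg, div_eq_mul_inv, inv_modulus_eq_prod]
  have hoff : ∏ p ∈ primesUpTo (2 ^ m) \ Q, ((p : ℝ) / (p - 1) * (1 + -(p : ℝ)⁻¹)) = 1 :=
    prod_eq_one fun p hp => by
      have := hp2 p (mem_sdiff.1 hp).1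
      field_simp [show (p : ℝ) ≠ 0 by linarith, show (p : ℝ) - 1 ≠ 0 by linarith]
      ring_nf
  have hon : ∏ p ∈ Q, ((p : ℝ) / (p - 1) * -(p : ℝ)⁻¹) = (-1) ^ #Q / totientProd Q := by
    rw [totientProd, ← prod_const, ← prod_div_distrib]
    refine prod_congr rfl fun p hp => ?_
    have := hp2 p (hQ hp)
    field_simp [show (p : ℝ) ≠ 0 by linarith, show (p : ℝ) - 1 ≠ 0 by linarith]
  rw [prod_mul_distrib] at hoff hon
  calc ∑ A ∈ Icc Q (primesUpTo (2 ^ m)), mertensProd m * (-1) ^ #A / modulus A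
      = mertensProd m * ((∏ p ∈ Q, -(p : ℝ)⁻¹) *
          ∏ p ∈ primesUpTo (2 ^ m) \ Q, (1 + -(p : ℝ)⁻¹)) := by
        rw [sum_congr rfl fun A _ => hterm A, ← mul_sum, sum_Icc_prod hQ]
    _ = (-1) ^ #Q / totientProd Q := by
        rw [mertensProd, ← prod_sdiff hQ, ← hon]
        linear_combination
          ((∏ p ∈ Q, (p : ℝ) / (p - 1)) * ∏ p ∈ Q, -(p : ℝ)⁻¹) * hoff

theorem abs_ramanujanCoeff_brunSieve_sub_le (hQ : Q ⊆ primesUpTo (2 ^ m)) :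
    |ramanujanCoeff (primesUpTo (2 ^ m)) (brunSieve m) Q - (-1) ^ #Q / totientProd Q| ≤
      brunTail m * eulerWeight 2 Q := by
  have hV := one_le_mertensProd m
  refine le_trans ?_ (mertensProd_mul_sum_lt_card_le hQ)
  rw [← sum_Icc_mertensProd_mul_neg_one_pow hQ, ramanujanCoeff, ← sum_sub_distrib, sum_filter,
    mul_sum]
  refine (abs_sum_le_sum_abs _ _).trans (sum_le_sum fun A _ => ?_)
  unfold brunSieve
  split_ifs with h h'
  · omega
  · rw [sub_self, abs_zero, mul_zero]
  · rw [zero_div, zero_sub, abs_neg, abs_div, abs_mul, abs_pow, abs_neg, abs_one, one_pow, mul_one,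
      Nat.abs_cast, abs_of_nonneg (zero_le_one.trans hV), div_eq_mul_inv]
  · omega

theorem abs_ramanujanCoeff_brunSieve_le (hQ : Q ⊆ primesUpTo (2 ^ m)) :
    |ramanujanCoeff (primesUpTo (2 ^ m)) (brunSieve m) Q| ≤
      (1 + brunTail m) * eulerWeight 2 Q := by
  have hprime : ∀ p ∈ Q, p.Prime := fun p hp => prime_of_mem_primesUpTo (hQ hp)
  have hmain : |(-1) ^ #Q / totientProd Q| ≤ eulerWeight 2 Q := by
    rw [abs_div, abs_pow, abs_neg, abs_one, one_pow, abs_of_pos (totientProd_pos hprime), one_div]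
    exact inv_totientProd_le hprime
  have := abs_sub_abs_le_abs_sub (ramanujanCoeff (primesUpTo (2 ^ m)) (brunSieve m) Q)
    ((-1) ^ #Q / totientProd Q)
  linarith [abs_ramanujanCoeff_brunSieve_sub_le hQ]

theorem exists_brunTail_le :
    ∃ D : ℝ, 1 ≤ D ∧ ∀ m, 1 ≤ m → brunTail m ^ 2 ≤ D / 2 ^ m ∧ brunTail m ≤ D := by
  obtain ⟨B, hB⟩ :=
    (tendsto_pow_const_div_const_pow_of_one_lt 12 (one_lt_two : (1 : ℝ) < 2)).bddAbove_range
  set D := max 1 (16 ^ 6 * B)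
  have hD : 1 ≤ D := le_max_left _ _
  refine ⟨D, hD, fun m hm => ?_⟩
  have hV := one_le_mertensProd m
  have hsq : brunTail m ^ 2 ≤ D / 2 ^ m := by
    calc brunTail m ^ 2 = mertensProd m ^ 6 / 2 ^ m / 2 ^ m := by
          unfold brunTail
          field_simp
      _ ≤ (16 * (m : ℝ) ^ 2) ^ 6 / 2 ^ m / 2 ^ m := by
          gcongr
          exact mertensProd_le hm
      _ = 16 ^ 6 * ((m : ℝ) ^ 12 / 2 ^ m) / 2 ^ m := by ring
      _ ≤ 16 ^ 6 * B / 2 ^ m := by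
          gcongr
          exact hB ⟨m, rfl⟩
      _ ≤ D / 2 ^ m := by
          gcongr
          exact le_max_right _ _
  refine ⟨hsq, (abs_le_of_sq_le_sq' ?_ (by linarith)).2⟩
  calc brunTail m ^ 2 ≤ D / 2 ^ m := hsq
    _ ≤ D := div_le_self (by linarith) (one_le_pow₀ one_le_two)
    _ ≤ D ^ 2 := le_self_pow₀ hD two_ne_zero

theorem modulus_le_two_pow {r : ℕ} (hQ : Q ⊆ primesUpTo (2 ^ m)) (hr : #Q ≤ r) :
    modulus Q ≤ 2 ^ (m * r) := by
  refine (prod_le_pow_card _ _ _ fun p hp => (mem_primesUpTo.1 (hQ hp)).2).trans ?_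
  rw [← pow_mul]
  exact Nat.pow_le_pow_right two_pos (Nat.mul_le_mul_left _ hr)

theorem eulerWeight_two_le_eulerWeight_eight (Q : Finset ℕ) : eulerWeight 2 Q ≤ eulerWeight 8 Q :=
  eulerWeight_mono zero_le_two (by norm_num) Q

theorem maximalDecay_brunError : MaximalDecay brunError := by
  obtain ⟨D, hD1, hD⟩ := exists_brunTail_le
  refine maximalDecay_of_ramanujanExpansion (zero_lt_one.trans_le hD1)
    (𝒬 := fun m => {Q ∈ (primesUpTo (2 ^ m)).powerset | #Q ≤ m + 1})
    (fun m n => divisorSum_eq_ramanujanExpansion (fun _ => prime_of_mem_primesUpTo)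
      brunRemainder_eq_zero (fun Q hQ hr => mem_filter.2 ⟨mem_powerset.2 hQ, hr⟩) n) ?_ ?_ ?_
  all_goals simp only [mem_filter, mem_powerset]
  · exact fun m Q hQ p hp => prime_of_mem_primesUpTo (hQ.1 hp)
  · refine fun m hm Q hQ => (modulus_le_two_pow hQ.1 hQ.2).trans
      (Nat.pow_le_pow_right two_pos ?_)
    nlinarith
  · intro m hm Q hQ
    rw [if_pos hQ.1]
    calc ramanujanCoeff (primesUpTo (2 ^ m)) (brunRemainder m) Q ^ 2
        ≤ (brunTail m * eulerWeight 8 Q) ^ 2 := by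
          rw [← sq_abs]
          have := brunTail_nonneg m
          gcongr
          exact (abs_ramanujanCoeff_brunRemainder_le hQ.1).trans
            (by gcongr; exact eulerWeight_two_le_eulerWeight_eight Q)
      _ = brunTail m ^ 2 * eulerWeight 8 Q ^ 2 := by ring
      _ ≤ D / 2 ^ m * eulerWeight 8 Q ^ 2 := by
          gcongr
          exact (hD m hm).1
      _ = D * eulerWeight 8 Q ^ 2 * (1 / 2 ^ m) := by ring

/-- Inside `primesUpTo (2 ^ m)` the two main terms cancel; outside, the second coefficient
vanishes. -/
theorem ramanujanCoeff_brunSieve_sub_sq_le {D : ℝ} (hD : 1 ≤ D)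
    (htail : ∀ k, 1 ≤ k → brunTail k ^ 2 ≤ D / 2 ^ k ∧ brunTail k ≤ D) (hm : 1 ≤ m)
    (hQ : Q ⊆ primesUpTo (2 ^ (2 * m))) :
    (ramanujanCoeff (primesUpTo (2 ^ (2 * m))) (brunSieve (2 * m)) Q -
        ramanujanCoeff (primesUpTo (2 ^ m)) (brunSieve m) Q) ^ 2 ≤
      (4 * D + (1 + D) ^ 2) * eulerWeight 8 Q ^ 2 *
        (if Q ⊆ primesUpTo (2 ^ m) then 1 / 2 ^ m else 1) := by
  have hweight := eulerWeight_two_le_eulerWeight_eight Q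
  have hweight' := eulerWeight_nonneg zero_le_two Q
  obtain ⟨hsq, -⟩ := htail m hm
  obtain ⟨hsq', hle'⟩ := htail (2 * m) (by omega)
  have htm := brunTail_nonneg m
  have htm' := brunTail_nonneg (2 * m)
  split_ifs with hs
  · have hdiff := (abs_sub _ _).trans
      (add_le_add (abs_ramanujanCoeff_brunSieve_sub_le hQ) (abs_ramanujanCoeff_brunSieve_sub_le hs))
    rw [sub_sub_sub_cancel_right, ← add_mul] at hdiff
    have hpow : D / 2 ^ (2 * m) ≤ D / 2 ^ m := by
      gcongr
      exacts [one_le_two, by omega]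
    have hsum : (brunTail (2 * m) + brunTail m) ^ 2 ≤ (4 * D + (1 + D) ^ 2) * (1 / 2 ^ m) := by
      calc (brunTail (2 * m) + brunTail m) ^ 2
          ≤ 2 * (brunTail (2 * m) ^ 2 + brunTail m ^ 2) := add_sq_le
        _ ≤ 4 * D * (1 / 2 ^ m) := by
            rw [mul_one_div, mul_div_assoc]
            linarith
        _ ≤ (4 * D + (1 + D) ^ 2) * (1 / 2 ^ m) := by
            gcongr
            exact le_add_of_nonneg_right (sq_nonneg _)
    rw [← sq_abs]
    calc _ ≤ ((brunTail (2 * m) + brunTail m) * eulerWeight 8 Q) ^ 2 := by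
          gcongr
          exact hdiff.trans (by gcongr)
      _ = (brunTail (2 * m) + brunTail m) ^ 2 * eulerWeight 8 Q ^ 2 := mul_pow _ _ _
      _ ≤ (4 * D + (1 + D) ^ 2) * (1 / 2 ^ m) * eulerWeight 8 Q ^ 2 := by gcongr
      _ = _ := by ring
  · rw [ramanujanCoeff_eq_zero_of_not_subset hs, sub_zero, mul_one, ← sq_abs]
    calc _ ≤ ((1 + D) * eulerWeight 8 Q) ^ 2 := by
          gcongr
          exact (abs_ramanujanCoeff_brunSieve_le hQ).trans (by gcongr)
      _ = (1 + D) ^ 2 * eulerWeight 8 Q ^ 2 := mul_pow _ _ _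
      _ ≤ _ := by
          gcongr
          linarith

theorem maximalDecay_brunWeight_two_mul_sub :
    MaximalDecay fun m n => brunWeight (2 * m) n - brunWeight m n := by
  obtain ⟨D, hD1, hD⟩ := exists_brunTail_le
  have hmono (m : ℕ) : primesUpTo (2 ^ m) ⊆ primesUpTo (2 ^ (2 * m)) :=
    primesUpTo_mono (Nat.pow_le_pow_right two_pos (by omega))
  refine maximalDecay_of_ramanujanExpansion (D := 4 * D + (1 + D) ^ 2) (by positivity)
    (𝒬 := fun m => {Q ∈ (primesUpTo (2 ^ (2 * m))).powerset | #Q ≤ 2 * m})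
    (c := fun m Q => ramanujanCoeff (primesUpTo (2 ^ (2 * m))) (brunSieve (2 * m)) Q -
      ramanujanCoeff (primesUpTo (2 ^ m)) (brunSieve m) Q) (fun m n => ?_) ?_ ?_ ?_
  · have hfine := divisorSum_eq_ramanujanExpansion (a := brunSieve (2 * m)) (r := 2 * m)
      (fun _ => prime_of_mem_primesUpTo) brunSieve_eq_zero
      (𝒬 := {Q ∈ (primesUpTo (2 ^ (2 * m))).powerset | #Q ≤ 2 * m})
      (fun Q hQ hr => mem_filter.2 ⟨mem_powerset.2 hQ, hr⟩) n
    have hcoarse := divisorSum_eq_ramanujanExpansion (a := brunSieve m) (r := m)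
      (fun _ => prime_of_mem_primesUpTo) brunSieve_eq_zero
      (𝒬 := {Q ∈ (primesUpTo (2 ^ (2 * m))).powerset | #Q ≤ 2 * m})
      (fun Q hQ hr => mem_filter.2
        ⟨mem_powerset.2 (hQ.trans (hmono m)), hr.trans (by omega : m ≤ 2 * m)⟩) n
    simp only [brunWeight, hfine, hcoarse, ramanujanExpansion, sub_mul, sum_sub_distrib]
  all_goals simp only [mem_filter, mem_powerset]
  · exact fun m Q hQ p hp => prime_of_mem_primesUpTo (hQ.1 hp)
  · refine fun m _ Q hQ => (modulus_le_two_pow hQ.1 hQ.2).trans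
      (Nat.pow_le_pow_right two_pos ?_)
    nlinarith
  · exact fun m hm Q hQ => ramanujanCoeff_brunSieve_sub_sq_le hD1 hD hm hQ.1

end BrunCoefficients

open scoped FinsetFamily

section SelbergWeight

theorem sum_le_sum_of_injOn {ι κ M : Type*} [AddCommMonoid M] [PartialOrder M]
    [IsOrderedAddMonoid M] {s : Finset ι} {t : Finset κ} {f : ι → M} {g : κ → M} (e : ι → κ)
    (he : ∀ i ∈ s, e i ∈ t) (hinj : Set.InjOn e s) (hg : ∀ j ∈ t, 0 ≤ g j)
    (hfg : ∀ i ∈ s, f i ≤ g (e i)) : ∑ i ∈ s, f i ≤ ∑ j ∈ t, g j := by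
  classical
  calc ∑ i ∈ s, f i ≤ ∑ i ∈ s, g (e i) := sum_le_sum hfg
    _ = ∑ j ∈ s.image e, g j := (sum_image hinj).symm
    _ ≤ ∑ j ∈ t, g j := sum_le_sum_of_subset_of_nonneg (image_subset_iff.2 he) fun j hj _ => hg j hj

/-- The support of the Selberg weights: the squarefree `d ≤ R` composed of primes in `P`, each
encoded by its set of prime factors. -/
def sieveSupport (P : Finset ℕ) (R : ℕ) : Finset (Finset ℕ) := {A ∈ P.powerset | modulus A ≤ R}

/-- The normalizing factor `∑ 1 / φ(d)` of the Selberg sieve, over `d` in `sieveSupport P R`. -/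
noncomputable def selbergNormalizer (P : Finset ℕ) (R : ℕ) : ℝ :=
  ∑ A ∈ sieveSupport P R, (totientProd A)⁻¹

/-- The Selberg sum `∑ μ(d) / φ(d) c_d(n)`, over `d` in `sieveSupport P R`, whose square detects the
integers free of prime factors in `P`. -/
noncomputable def selbergSum (P : Finset ℕ) (R : ℕ) (n : ℤ) : ℝ :=
  ∑ A ∈ sieveSupport P R, (-1) ^ #A * (totientProd A)⁻¹ * ramanujanProd A n

variable {P : Finset ℕ} {R : ℕ}

theorem mem_sieveSupport {A : Finset ℕ} : A ∈ sieveSupport P R ↔ A ⊆ P ∧ modulus A ≤ R := by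
  rw [sieveSupport, mem_filter, mem_powerset]

theorem modulus_mono {A B : Finset ℕ} (hB : ∀ p ∈ B, p.Prime) (h : A ⊆ B) :
    modulus A ≤ modulus B :=
  prod_le_prod_of_subset_of_one_le' h fun p hp _ => (hB p hp).one_lt.le

theorem mem_sieveSupport_of_subset (hP : ∀ p ∈ P, p.Prime) {A B : Finset ℕ}
    (hB : B ∈ sieveSupport P R) (h : A ⊆ B) : A ∈ sieveSupport P R := by
  rw [mem_sieveSupport] at hB ⊢
  exact ⟨h.trans hB.1, (modulus_mono (fun p hp => hP p (hB.1 hp)) h).trans hB.2⟩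

theorem empty_mem_sieveSupport (P : Finset ℕ) (hR : 1 ≤ R) : ∅ ∈ sieveSupport P R :=
  mem_sieveSupport.2 ⟨empty_subset P, by simpa [modulus] using hR⟩

theorem totientProd_pos_of_mem (hP : ∀ p ∈ P, p.Prime) {A : Finset ℕ}
    (hA : A ∈ sieveSupport P R) : 0 < totientProd A :=
  totientProd_pos fun p hp => hP p ((mem_sieveSupport.1 hA).1 hp)

theorem selbergNormalizer_pos (hP : ∀ p ∈ P, p.Prime) (hR : 1 ≤ R) : 0 < selbergNormalizer P R :=
  sum_pos (fun _ hA => inv_pos.2 (totientProd_pos_of_mem hP hA)) ⟨∅, empty_mem_sieveSupport P hR⟩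

theorem selbergSum_of_forall_not_dvd {n : ℤ} (hn : ∀ p ∈ P, ¬ (p : ℤ) ∣ n) :
    selbergSum P R n = selbergNormalizer P R := by
  refine sum_congr rfl fun A hA => ?_
  have hprod : ramanujanProd A n = (-1) ^ #A :=
    prod_eq_pow_card fun p hp => if_neg (hn p ((mem_sieveSupport.1 hA).1 hp))
  rw [hprod, mul_right_comm, ← mul_pow, neg_one_mul, neg_neg, one_pow, one_mul]

theorem log_le_two_mul_sum_squarefree (hR : 1 ≤ R) :
    Real.log R ≤ 2 * ∑ a ∈ Icc 1 R with Squarefree a, (a : ℝ)⁻¹ := by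
  choose a b hab hsq using Nat.sq_mul_squarefree
  have hlog : Real.log R ≤ ∑ n ∈ Icc 1 R, (n : ℝ)⁻¹ := by
    have hharmonic := log_add_one_le_harmonic R
    rw [harmonic_eq_sum_Icc] at hharmonic
    push_cast at hharmonic
    exact (Real.log_le_log (by exact_mod_cast hR) (by linarith)).trans hharmonic
  have hfactor : ∑ n ∈ Icc 1 R, (n : ℝ)⁻¹ ≤
      ∑ x ∈ {a ∈ Icc 1 R | Squarefree a} ×ˢ Ioo 0 (R + 1), (x.1 : ℝ)⁻¹ * ((x.2 : ℝ) ^ 2)⁻¹ := by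
    refine sum_le_sum_of_injOn (fun n => (a n, b n)) (fun n hn => ?_) (fun n _ n' _ h => ?_)
      (fun _ _ => by positivity) fun n _ => le_of_eq ?_
    · have hn' := mem_Icc.1 hn
      have hprod : 0 < b n ^ 2 * a n := (hab n).symm ▸ hn'.1
      have ha : 0 < a n := Nat.pos_of_mul_pos_left hprod
      have hb : 0 < b n := Nat.pos_of_ne_zero fun h => by simp [h] at hprod
      have han : a n ≤ n := Nat.le_of_dvd hn'.1 (Dvd.intro_left _ (hab n))
      have hbn : b n ≤ n :=
        Nat.le_of_dvd hn'.1 ((dvd_pow_self _ two_ne_zero).trans (Dvd.intro _ (hab n)))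
      simp only [mem_product, mem_filter, mem_Icc, mem_Ioo]
      exact ⟨⟨⟨ha, by omega⟩, hsq n⟩, hb, by omega⟩
    · simp only [Prod.mk.injEq] at h
      rw [← hab n, ← hab n', h.1, h.2]
    · conv_lhs => rw [← hab n]
      push_cast
      rw [mul_inv, mul_comm]
  simp only [sum_product, ← sum_mul_sum] at hfactor
  have hsquares := sum_Ioo_inv_sq_le (α := ℝ) 0 (R + 1)
  norm_num at hsquares
  calc Real.log R ≤ _ := hlog.trans hfactor
    _ ≤ _ * 2 := by gcongr
    _ = _ := mul_comm _ _

theorem sum_squarefree_le_selbergNormalizer (R : ℕ) :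
    ∑ a ∈ Icc 1 R with Squarefree a, (a : ℝ)⁻¹ ≤ selbergNormalizer (primesUpTo R) R := by
  have hprod {a : ℕ} (ha : a ∈ {a ∈ Icc 1 R | Squarefree a}) : modulus a.primeFactors = a :=
    Nat.prod_primeFactors_of_squarefree (mem_filter.1 ha).2
  refine sum_le_sum_of_injOn Nat.primeFactors (fun a ha => ?_) (fun a ha b hb hab => ?_)
    (fun A hA => (inv_pos.2 (totientProd_pos_of_mem
      (fun _ => prime_of_mem_primesUpTo) hA)).le) fun a ha => ?_
  · have haR := (mem_Icc.1 (mem_filter.1 ha).1).2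
    exact mem_sieveSupport.2 ⟨fun p hp => mem_primesUpTo.2
      ⟨Nat.prime_of_mem_primeFactors hp, (Nat.le_of_mem_primeFactors hp).trans haR⟩,
      (hprod ha).trans_le haR⟩
  · rw [← hprod ha, ← hprod hb, hab]
  · have hprime : ∀ p ∈ a.primeFactors, p.Prime := fun p => Nat.prime_of_mem_primeFactors
    refine inv_anti₀ (totientProd_pos hprime) ?_
    conv_rhs => rw [← hprod ha, modulus, Nat.cast_prod]
    exact prod_le_prod (fun p hp => by linarith [two_le_cast_of_prime (hprime p hp)])
      fun p _ => by linarith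

theorem totientProd_union {A B : Finset ℕ} (h : Disjoint A B) :
    totientProd (A ∪ B) = totientProd A * totientProd B :=
  prod_union h

theorem selbergNormalizer_le_mul_sdiff (hP : ∀ p ∈ P, p.Prime) (S : Finset ℕ) (R : ℕ) :
    selbergNormalizer P R ≤
      (∑ A ∈ (P ∩ S).powerset, (totientProd A)⁻¹) * selbergNormalizer (P \ S) R := by
  rw [selbergNormalizer, selbergNormalizer, sum_mul_sum, ← sum_product']
  refine sum_le_sum_of_injOn (fun A => (A ∩ S, A \ S)) (fun A hA => ?_) (fun A _ B _ h => ?_)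
    (fun x hx => ?_) fun A _ => le_of_eq ?_
  · have hAP := (mem_sieveSupport.1 hA).1
    have hle := (modulus_mono (fun p hp => hP p (hAP hp)) (sdiff_subset (t := S))).trans
      (mem_sieveSupport.1 hA).2
    exact mem_product.2 ⟨mem_powerset.2 (inter_subset_inter_right hAP),
      mem_sieveSupport.2 ⟨sdiff_subset_sdiff hAP le_rfl, hle⟩⟩
  · simp only [Prod.mk.injEq] at h
    rw [← sdiff_union_inter A S, ← sdiff_union_inter B S, h.1, h.2]
  · obtain ⟨hx₁, hx₂⟩ := mem_product.1 hx
    have hpos₁ : 0 < totientProd x.1 :=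
      totientProd_pos fun p hp => hP p (mem_inter.1 (mem_powerset.1 hx₁ hp)).1
    have hpos₂ := totientProd_pos_of_mem (fun p hp => hP p (mem_sdiff.1 hp).1) hx₂
    positivity
  · rw [← mul_inv, ← totientProd_union (disjoint_sdiff_inter A S).symm, union_comm,
      sdiff_union_inter]

theorem mertensProd_eq_sum_inv_totientProd (m : ℕ) :
    mertensProd m = ∑ A ∈ (primesUpTo (2 ^ m)).powerset, (totientProd A)⁻¹ := by
  simp only [totientProd, ← prod_inv_distrib]
  rw [← prod_one_add, mertensProd]
  refine prod_congr rfl fun p hp => ?_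
  have hne : (p : ℝ) - 1 ≠ 0 := by linarith [two_le_cast_of_prime (prime_of_mem_primesUpTo hp)]
  field_simp
  ring

theorem log_le_mertensProd_mul_selbergNormalizer (m : ℕ) (hR : 2 ^ m ≤ R) :
    Real.log R ≤
      2 * (mertensProd m * selbergNormalizer (primesUpTo R \ primesUpTo (2 ^ m)) R) := by
  have hsplit := selbergNormalizer_le_mul_sdiff (P := primesUpTo R)
    (fun _ => prime_of_mem_primesUpTo) (primesUpTo (2 ^ m)) R
  rw [inter_eq_right.2 (primesUpTo_mono hR), ← mertensProd_eq_sum_inv_totientProd] at hsplit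
  calc Real.log R ≤ _ := log_le_two_mul_sum_squarefree (Nat.one_le_two_pow.trans hR)
    _ ≤ _ := by
      gcongr
      exact (sum_squarefree_le_selbergNormalizer R).trans hsplit

end SelbergWeight

section SelbergCoefficients

theorem ramanujanProd_mul_ramanujanProd (A B : Finset ℕ) (n : ℤ) :
    ramanujanProd A n * ramanujanProd B n = ∑ H ∈ (A ∩ B).powerset,
      totientProd H * (∏ p ∈ (A ∩ B) \ H, ((p : ℝ) - 2)) * ramanujanProd ((A ∪ B) \ H) n := by
  have hsq : ramanujanProd (A ∩ B) n * ramanujanProd (A ∩ B) n = ∑ H ∈ (A ∩ B).powerset,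
      totientProd H * ∏ p ∈ (A ∩ B) \ H, ((p : ℝ) - 2) * ramanujanSum p n := by
    simp only [totientProd]
    rw [ramanujanProd, ← prod_mul_distrib, ← prod_add]
    refine prod_congr rfl fun p _ => ?_
    unfold ramanujanSum
    split_ifs <;> ring
  have hunion {H : Finset ℕ} (hH : H ⊆ A ∩ B) : ramanujanProd ((A ∪ B) \ H) n =
      ramanujanProd ((A ∪ B) \ (A ∩ B)) n * ramanujanProd ((A ∩ B) \ H) n := by
    have hsub : (A ∩ B) \ H ⊆ (A ∪ B) \ H := sdiff_subset_sdiff inter_subset_union le_rfl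
    have hsdiff : ((A ∪ B) \ H) \ ((A ∩ B) \ H) = (A ∪ B) \ (A ∩ B) := by
      rw [sdiff_sdiff_left, sup_eq_union, union_sdiff_of_subset hH]
    rw [ramanujanProd, ← prod_sdiff hsub, hsdiff, ramanujanProd, ramanujanProd]
  calc ramanujanProd A n * ramanujanProd B n
      = ramanujanProd (A ∪ B) n * ramanujanProd (A ∩ B) n := prod_union_inter.symm
    _ = ramanujanProd ((A ∪ B) \ (A ∩ B)) n *
          (ramanujanProd (A ∩ B) n * ramanujanProd (A ∩ B) n) := by
        rw [← mul_assoc]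
        exact congrArg (· * _) (prod_sdiff inter_subset_union).symm
    _ = _ := by
        rw [hsq, mul_sum]
        refine sum_congr rfl fun H hH => ?_
        rw [hunion (mem_powerset.1 hH), prod_mul_distrib, ramanujanProd, ramanujanProd]
        ring

/-- The index set of the expansion of the square of `selbergSum P R`: triples `((A, B), H)` where
`A` and `B` lie in `sieveSupport P R` and `H ⊆ A ∩ B`. Such a triple contributes to the Ramanujan
sum indexed by `(A ∪ B) \ H`. -/
def selbergTriples (P : Finset ℕ) (R : ℕ) : Finset ((_ : Finset ℕ × Finset ℕ) × Finset ℕ) :=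
  (sieveSupport P R ×ˢ sieveSupport P R).sigma fun AB => (AB.1 ∩ AB.2).powerset

/-- The contribution of the triple `((A, B), H)` in `selbergTriples P R`. -/
noncomputable def selbergTerm (A B H : Finset ℕ) : ℝ :=
  (-1) ^ #A * (totientProd A)⁻¹ * ((-1) ^ #B * (totientProd B)⁻¹) *
    (totientProd H * ∏ p ∈ (A ∩ B) \ H, ((p : ℝ) - 2))

/-- The coefficient of the Ramanujan sum indexed by `Q` in the Selberg weight
`selbergSum P R n ^ 2 / selbergNormalizer P R`. -/
noncomputable def selbergCoeff (P : Finset ℕ) (R : ℕ) (Q : Finset ℕ) : ℝ :=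
  (∑ i ∈ selbergTriples P R with (i.1.1 ∪ i.1.2) \ i.2 = Q, selbergTerm i.1.1 i.1.2 i.2) /
    selbergNormalizer P R

variable {P : Finset ℕ} {R : ℕ}

theorem mem_selbergTriples {A B H : Finset ℕ} : ⟨(A, B), H⟩ ∈ selbergTriples P R ↔
    (A ∈ sieveSupport P R ∧ B ∈ sieveSupport P R) ∧ H ⊆ A ∩ B := by
  rw [selbergTriples, mem_sigma, mem_product, mem_powerset]

theorem selbergSum_sq (P : Finset ℕ) (R : ℕ) (n : ℤ) :
    selbergSum P R n ^ 2 = ∑ i ∈ selbergTriples P R,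
      selbergTerm i.1.1 i.1.2 i.2 * ramanujanProd ((i.1.1 ∪ i.1.2) \ i.2) n := by
  rw [selbergSum, selbergTriples, sq, sum_mul_sum, ← sum_product', sum_sigma]
  refine sum_congr rfl fun AB _ => ?_
  rw [mul_mul_mul_comm, ramanujanProd_mul_ramanujanProd, mul_sum]
  exact sum_congr rfl fun H _ => by rw [selbergTerm]; ring

theorem union_sdiff_mem_sieveSupport (hP : ∀ p ∈ P, p.Prime) {A B : Finset ℕ}
    (hA : A ∈ sieveSupport P R) (hB : B ∈ sieveSupport P R) (H : Finset ℕ) :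
    (A ∪ B) \ H ∈ sieveSupport P (R ^ 2) := by
  rw [mem_sieveSupport] at hA hB
  refine mem_sieveSupport_of_subset hP (mem_sieveSupport.2 ⟨union_subset hA.1 hB.1, ?_⟩)
    sdiff_subset
  rw [sq]
  exact (modulus_union_le fun p hp => hP p (hA.1 hp)).trans (Nat.mul_le_mul hA.2 hB.2)

theorem selbergSum_sq_div_eq_ramanujanExpansion (hP : ∀ p ∈ P, p.Prime) (R : ℕ) (n : ℤ) :
    selbergSum P R n ^ 2 / selbergNormalizer P R =
      ramanujanExpansion (sieveSupport P (R ^ 2)) (selbergCoeff P R) n := by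
  have hmaps : ∀ i ∈ selbergTriples P R, (i.1.1 ∪ i.1.2) \ i.2 ∈ sieveSupport P (R ^ 2) := by
    rintro ⟨⟨A, B⟩, H⟩ hi
    obtain ⟨⟨hA, hB⟩, -⟩ := mem_selbergTriples.1 hi
    exact union_sdiff_mem_sieveSupport hP hA hB H
  rw [selbergSum_sq, ← sum_fiberwise_of_maps_to hmaps, sum_div]
  refine sum_congr rfl fun Q _ => ?_
  rw [selbergCoeff, div_mul_eq_mul_div, sum_mul]
  exact congrArg (· / _) (sum_congr rfl fun i hi => by rw [(mem_filter.1 hi).2])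

theorem selbergTerm_self {A : Finset ℕ} (hA : 0 < totientProd A) :
    selbergTerm A A A = (totientProd A)⁻¹ := by
  have hsign : ((-1 : ℝ) ^ #A) * (-1) ^ #A = 1 := by
    rw [← mul_pow, neg_one_mul, neg_neg, one_pow]
  rw [selbergTerm, inter_self, sdiff_self, bot_eq_empty, prod_empty, mul_one, mul_mul_mul_comm,
    hsign, one_mul, mul_assoc, inv_mul_cancel₀ hA.ne', mul_one]

theorem selbergCoeff_empty (hP : ∀ p ∈ P, p.Prime) (hR : 1 ≤ R) : selbergCoeff P R ∅ = 1 := by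
  rw [selbergCoeff, div_eq_one_iff_eq (selbergNormalizer_pos hP hR).ne', selbergNormalizer]
  symm
  refine sum_nbij (fun A => ⟨(A, A), A⟩) (fun A hA => ?_) (fun A _ B _ h => ?_) ?_ fun A hA => ?_
  · exact mem_filter.2 ⟨mem_selbergTriples.2 ⟨⟨hA, hA⟩, (inter_self A).ge⟩, by simp⟩
  · simp_all
  · rintro ⟨⟨A, B⟩, H⟩ hi
    simp only [coe_filter, Set.mem_ofPred_eq, mem_selbergTriples, sdiff_eq_empty_iff_subset] at hi
    obtain ⟨⟨⟨hA, -⟩, hH⟩, hQ⟩ := hi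
    have hAH : H = A := (hH.trans inter_subset_left).antisymm (subset_union_left.trans hQ)
    have hBH : H = B := (hH.trans inter_subset_right).antisymm (subset_union_right.trans hQ)
    subst hAH hBH
    exact ⟨H, hA, rfl⟩
  · exact (selbergTerm_self (totientProd_pos_of_mem hP hA)).symm

theorem abs_selbergTerm_le {A B H : Finset ℕ} (hA : ∀ p ∈ A, p.Prime) (hB : ∀ p ∈ B, p.Prime)
    (hH : H ⊆ A ∩ B) :
    |selbergTerm A B H| ≤ (totientProd ((A ∪ B) \ H))⁻¹ * (totientProd H)⁻¹ := by
  set ψ := ∏ p ∈ (A ∩ B) \ H, ((p : ℝ) - 2)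
  have htwo : ∀ p ∈ (A ∩ B) \ H, (2 : ℝ) ≤ p := fun p hp =>
    two_le_cast_of_prime (hA p (mem_inter.1 (mem_sdiff.1 hp).1).1)
  have hψ : 0 ≤ ψ := prod_nonneg fun p hp => by linarith [htwo p hp]
  have hψ_le : ψ ≤ totientProd ((A ∩ B) \ H) :=
    prod_le_prod (fun p hp => by linarith [htwo p hp]) fun p _ => by linarith
  have hposA := totientProd_pos hA
  have hposB := totientProd_pos hB
  have hposH := totientProd_pos fun p hp => hA p (mem_inter.1 (hH hp)).1
  have hposI : 0 < totientProd ((A ∩ B) \ H) :=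
    totientProd_pos fun p hp => hA p (mem_inter.1 (mem_sdiff.1 hp).1).1
  have hposQ : 0 < totientProd ((A ∪ B) \ H) :=
    totientProd_pos fun p hp => (mem_union.1 (mem_sdiff.1 hp).1).elim (hA p) (hB p)
  have hsplit {S : Finset ℕ} (hS : H ⊆ S) : totientProd S = totientProd (S \ H) * totientProd H :=
    (prod_sdiff hS).symm
  have hprod : totientProd A * totientProd B =
      totientProd ((A ∪ B) \ H) * totientProd H *
        (totientProd ((A ∩ B) \ H) * totientProd H) := by
    rw [← hsplit (hH.trans inter_subset_union), ← hsplit hH]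
    exact prod_union_inter.symm
  have habs : |selbergTerm A B H| =
      (totientProd A * totientProd B)⁻¹ * (totientProd H * ψ) := by
    simp only [selbergTerm, abs_mul, abs_pow, abs_neg, abs_one, one_pow, one_mul, abs_inv,
      abs_of_pos hposA, abs_of_pos hposB, abs_of_pos hposH, mul_inv]
    rw [abs_of_nonneg hψ]
  rw [habs, hprod, mul_inv, mul_assoc, ← mul_inv]
  refine mul_le_of_le_one_right (by positivity) ((inv_mul_le_one₀ (by positivity)).2 ?_)
  rw [mul_comm]
  gcongr

theorem sum_inv_totientProd_selbergTriples_le (hP : ∀ p ∈ P, p.Prime) (R : ℕ) (Q : Finset ℕ) :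
    ∑ i ∈ selbergTriples P R with (i.1.1 ∪ i.1.2) \ i.2 = Q, (totientProd i.2)⁻¹ ≤
      4 ^ #Q * selbergNormalizer P R := by
  have hinj : ∑ i ∈ selbergTriples P R with (i.1.1 ∪ i.1.2) \ i.2 = Q, (totientProd i.2)⁻¹ ≤
      ∑ x ∈ (Q.powerset ×ˢ Q.powerset) ×ˢ sieveSupport P R, (totientProd x.2)⁻¹ := by
    refine sum_le_sum_of_injOn (fun i => ((i.1.1 \ i.2, i.1.2 \ i.2), i.2)) ?_ ?_
      (fun x hx => (inv_pos.2 (totientProd_pos_of_mem hP (mem_product.1 hx).2)).le)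
      fun _ _ => le_rfl
    · rintro ⟨⟨A, B⟩, H⟩ hi
      obtain ⟨hmem, rfl⟩ := mem_filter.1 hi
      obtain ⟨⟨hA, -⟩, hH⟩ := mem_selbergTriples.1 hmem
      simp only [mem_product, mem_powerset]
      exact ⟨⟨sdiff_subset_sdiff subset_union_left le_rfl,
        sdiff_subset_sdiff subset_union_right le_rfl⟩,
        mem_sieveSupport_of_subset hP hA (hH.trans inter_subset_left)⟩
    · rintro ⟨⟨A, B⟩, H⟩ hi ⟨⟨A', B'⟩, H'⟩ hi' h
      have hH := (mem_selbergTriples.1 (mem_filter.1 hi).1).2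
      have hH' := (mem_selbergTriples.1 (mem_filter.1 hi').1).2
      simp only [Prod.mk.injEq] at h
      obtain ⟨⟨hA, hB⟩, rfl⟩ := h
      rw [← sdiff_union_of_subset (hH.trans inter_subset_left), hA,
        sdiff_union_of_subset (hH'.trans inter_subset_left),
        ← sdiff_union_of_subset (hH.trans inter_subset_right), hB,
        sdiff_union_of_subset (hH'.trans inter_subset_right)]
  refine hinj.trans_eq ?_
  simp only [sum_product, sum_const, card_product]
  rw [card_powerset, nsmul_eq_mul, selbergNormalizer, ← mul_pow]
  norm_num

theorem eulerWeight_two_mul_four_pow (Q : Finset ℕ) :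
    eulerWeight 2 Q * 4 ^ #Q = eulerWeight 8 Q := by
  rw [eulerWeight, eulerWeight, ← prod_const, ← prod_mul_distrib]
  exact prod_congr rfl fun p _ => by ring

theorem abs_selbergCoeff_le (hP : ∀ p ∈ P, p.Prime) (hR : 1 ≤ R) {Q : Finset ℕ} (hQ : Q ⊆ P) :
    |selbergCoeff P R Q| ≤ eulerWeight 8 Q := by
  have hQprime : ∀ p ∈ Q, p.Prime := fun p hp => hP p (hQ hp)
  have hnorm := selbergNormalizer_pos hP hR
  have hposQ := totientProd_pos hQprime
  rw [selbergCoeff, abs_div, abs_of_pos hnorm, div_le_iff₀ hnorm]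
  calc |∑ i ∈ selbergTriples P R with (i.1.1 ∪ i.1.2) \ i.2 = Q, selbergTerm i.1.1 i.1.2 i.2|
      ≤ ∑ i ∈ selbergTriples P R with (i.1.1 ∪ i.1.2) \ i.2 = Q,
          (totientProd Q)⁻¹ * (totientProd i.2)⁻¹ := by
        refine (abs_sum_le_sum_abs _ _).trans (sum_le_sum ?_)
        rintro ⟨⟨A, B⟩, H⟩ hi
        obtain ⟨hmem, rfl⟩ := mem_filter.1 hi
        obtain ⟨⟨hA, hB⟩, hH⟩ := mem_selbergTriples.1 hmem
        exact abs_selbergTerm_le (fun p hp => hP p ((mem_sieveSupport.1 hA).1 hp))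
          (fun p hp => hP p ((mem_sieveSupport.1 hB).1 hp)) hH
    _ ≤ (totientProd Q)⁻¹ * (4 ^ #Q * selbergNormalizer P R) := by
        rw [← mul_sum]
        gcongr
        exact sum_inv_totientProd_selbergTriples_le hP R Q
    _ ≤ eulerWeight 2 Q * (4 ^ #Q * selbergNormalizer P R) := by
        gcongr
        exact inv_totientProd_le hQprime
    _ = eulerWeight 8 Q * selbergNormalizer P R := by
        rw [← mul_assoc, eulerWeight_two_mul_four_pow]

end SelbergCoefficients

section MixedWeight

variable {S : Finset ℕ} {𝒬 ℛ : Finset (Finset ℕ)}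

theorem union_inter_eq_left_of_subset {Q Q' : Finset ℕ} (hQ : Q ⊆ S) (hQ' : Disjoint Q' S) :
    (Q ∪ Q') ∩ S = Q := by
  rw [union_inter_distrib_right, inter_eq_left.2 hQ, disjoint_iff_inter_eq_empty.1 hQ',
    union_empty]

theorem union_sdiff_eq_right_of_subset {Q Q' : Finset ℕ} (hQ : Q ⊆ S) (hQ' : Disjoint Q' S) :
    (Q ∪ Q') \ S = Q' := by
  rw [union_sdiff_distrib, sdiff_eq_empty_iff_subset.2 hQ, empty_union, hQ'.sdiff_eq_left]

theorem ramanujanExpansion_mul_ramanujanExpansion (h𝒬 : ∀ Q ∈ 𝒬, Q ⊆ S)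
    (hℛ : ∀ Q ∈ ℛ, Disjoint Q S) (c d : Finset ℕ → ℝ) (n : ℤ) :
    ramanujanExpansion 𝒬 c n * ramanujanExpansion ℛ d n =
      ramanujanExpansion (𝒬 ⊻ ℛ) (fun Q => c (Q ∩ S) * d (Q \ S)) n := by
  have hinter {x : Finset ℕ × Finset ℕ} (hx : x ∈ 𝒬 ×ˢ ℛ) : (x.1 ∪ x.2) ∩ S = x.1 :=
    union_inter_eq_left_of_subset (h𝒬 _ (mem_product.1 hx).1) (hℛ _ (mem_product.1 hx).2)
  have hsdiff {x : Finset ℕ × Finset ℕ} (hx : x ∈ 𝒬 ×ˢ ℛ) : (x.1 ∪ x.2) \ S = x.2 :=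
    union_sdiff_eq_right_of_subset (h𝒬 _ (mem_product.1 hx).1) (hℛ _ (mem_product.1 hx).2)
  have hinj : Set.InjOn (Function.uncurry (· ⊔ ·))
      ((𝒬 ×ˢ ℛ : Finset _) : Set (Finset ℕ × Finset ℕ)) := by
    refine fun x hx y hy (h : x.1 ∪ x.2 = y.1 ∪ y.2) => Prod.ext ?_ ?_
    · rw [← hinter hx, h, hinter hy]
    · rw [← hsdiff hx, h, hsdiff hy]
  rw [ramanujanExpansion, ramanujanExpansion, ramanujanExpansion, ← image_sup_product,
    sum_image hinj, sum_mul_sum, ← sum_product']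
  refine sum_congr rfl fun x hx => ?_
  have hdisj : Disjoint x.1 x.2 :=
    (hℛ _ (mem_product.1 hx).2).symm.mono_left (h𝒬 _ (mem_product.1 hx).1)
  have hprod : ramanujanProd (x.1 ∪ x.2) n = ramanujanProd x.1 n * ramanujanProd x.2 n :=
    prod_union hdisj
  simp only [Function.uncurry, sup_eq_union, hinter hx, hsdiff hx, hprod]
  ring

/-- The Selberg sieve weight of level `R = 2 ^ (m²)` for the primes in `(2 ^ m, 2 ^ (m²)]`. -/
noncomputable def selbergWeight (m : ℕ) (n : ℤ) : ℝ :=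
  selbergSum (primesUpTo (2 ^ m ^ 2) \ primesUpTo (2 ^ m)) (2 ^ m ^ 2) n ^ 2 /
    selbergNormalizer (primesUpTo (2 ^ m ^ 2) \ primesUpTo (2 ^ m)) (2 ^ m ^ 2)

theorem selbergWeight_sub_one_eq_ramanujanExpansion (m : ℕ) (n : ℤ) :
    selbergWeight m n - 1 = ramanujanExpansion
      ((sieveSupport (primesUpTo (2 ^ m ^ 2) \ primesUpTo (2 ^ m)) ((2 ^ m ^ 2) ^ 2)).erase ∅)
      (selbergCoeff (primesUpTo (2 ^ m ^ 2) \ primesUpTo (2 ^ m)) (2 ^ m ^ 2)) n := by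
  have hprime : ∀ p ∈ primesUpTo (2 ^ m ^ 2) \ primesUpTo (2 ^ m), p.Prime :=
    fun p hp => prime_of_mem_primesUpTo (mem_sdiff.1 hp).1
  have hR : 1 ≤ 2 ^ m ^ 2 := Nat.one_le_two_pow
  rw [selbergWeight, selbergSum_sq_div_eq_ramanujanExpansion hprime, ramanujanExpansion,
    ← add_sum_erase _ _ (empty_mem_sieveSupport _ (Nat.one_le_pow _ _ hR)),
    selbergCoeff_empty hprime hR, ramanujanProd, prod_empty, mul_one, add_sub_cancel_left,
    ramanujanExpansion]

theorem ramanujanCoeff_mul_selbergCoeff_sq_le {P Q Q' : Finset ℕ} {R m : ℕ} {D : ℝ}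
    (hP : ∀ p ∈ P, p.Prime) (hR : 1 ≤ R) (hQ : Q ⊆ primesUpTo (2 ^ m)) (hQ' : Q' ⊆ P)
    (hdisj : Disjoint Q Q') (hD : brunTail m ≤ D) :
    (ramanujanCoeff (primesUpTo (2 ^ m)) (brunSieve m) Q * selbergCoeff P R Q') ^ 2 ≤
      (1 + D) ^ 2 * eulerWeight 8 (Q ∪ Q') ^ 2 := by
  have hbrun := (abs_ramanujanCoeff_brunSieve_le hQ).trans
    (mul_le_mul (add_le_add_right hD 1) (eulerWeight_two_le_eulerWeight_eight Q)
      (eulerWeight_nonneg zero_le_two Q) (by linarith [brunTail_nonneg m]))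
  have hselberg : |selbergCoeff P R Q'| ≤ eulerWeight 8 Q' := abs_selbergCoeff_le hP hR hQ'
  have hunion : eulerWeight 8 (Q ∪ Q') = eulerWeight 8 Q * eulerWeight 8 Q' := prod_union hdisj
  rw [← mul_pow, ← sq_abs, abs_mul, hunion, ← mul_assoc]
  exact pow_le_pow_left₀ (by positivity) (mul_le_mul hbrun hselberg (abs_nonneg _)
    ((abs_nonneg _).trans hbrun)) 2

theorem maximalDecay_brunWeight_mul_selbergWeight_sub_one :
    MaximalDecay fun m n => brunWeight m n * (selbergWeight m n - 1) := by
  obtain ⟨D, hD1, hD⟩ := exists_brunTail_le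
  set S : ℕ → Finset ℕ := fun m => primesUpTo (2 ^ m)
  set P : ℕ → Finset ℕ := fun m => primesUpTo (2 ^ m ^ 2) \ S m
  have hprime {m p : ℕ} (hp : p ∈ P m) : p.Prime := prime_of_mem_primesUpTo (mem_sdiff.1 hp).1
  refine maximalDecay_of_ramanujanExpansion (D := (1 + D) ^ 2) (by positivity)
    (𝒬 := fun m => {Q ∈ (S m).powerset | #Q ≤ m} ⊻ (sieveSupport (P m) ((2 ^ m ^ 2) ^ 2)).erase ∅)
    (c := fun m Q => ramanujanCoeff (S m) (brunSieve m) (Q ∩ S m) *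
      selbergCoeff (P m) (2 ^ m ^ 2) (Q \ S m)) (fun m n => ?_) ?_ ?_ ?_
  · rw [brunWeight, selbergWeight_sub_one_eq_ramanujanExpansion,
      divisorSum_eq_ramanujanExpansion (a := brunSieve m) (r := m)
        (fun _ => prime_of_mem_primesUpTo) brunSieve_eq_zero
        (𝒬 := {Q ∈ (primesUpTo (2 ^ m)).powerset | #Q ≤ m})
        (fun Q hQ hr => mem_filter.2 ⟨mem_powerset.2 hQ, hr⟩)]
    exact ramanujanExpansion_mul_ramanujanExpansion
      (fun Q hQ => mem_powerset.1 (mem_filter.1 hQ).1)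
      (fun Q hQ => disjoint_of_subset_left (mem_sieveSupport.1 (mem_erase.1 hQ).2).1
        sdiff_disjoint) _ _ _
  all_goals
    simp only [mem_sups, mem_filter, mem_powerset, mem_erase, mem_sieveSupport, sup_eq_union]
  · rintro m - ⟨Q, ⟨hQ, -⟩, Q', ⟨-, hQ', -⟩, rfl⟩ p hp
    exact (mem_union.1 hp).elim (fun h => prime_of_mem_primesUpTo (hQ h)) fun h => hprime (hQ' h)
  · rintro m - - ⟨Q, ⟨hQ, hcard⟩, Q', ⟨-, -, hQ'⟩, rfl⟩
    refine (modulus_union_le fun p hp => prime_of_mem_primesUpTo (hQ hp)).trans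
      ((Nat.mul_le_mul (modulus_le_two_pow hQ hcard) hQ').trans ?_)
    rw [← pow_mul, ← pow_add]
    exact Nat.pow_le_pow_right two_pos (by nlinarith)
  · rintro m hm - ⟨Q, ⟨hQ, -⟩, Q', ⟨hne, hQ', -⟩, rfl⟩
    have hdisj : Disjoint Q' (S m) := disjoint_of_subset_left hQ' sdiff_disjoint
    have hnot : ¬ Q ∪ Q' ⊆ primesUpTo (2 ^ m) := fun h =>
      hne (disjoint_self_iff_empty Q' |>.1 (hdisj.mono_right (subset_union_right.trans h)))
    rw [if_neg hnot, mul_one, union_inter_eq_left_of_subset hQ hdisj,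
      union_sdiff_eq_right_of_subset hQ hdisj]
    exact ramanujanCoeff_mul_selbergCoeff_sq_le (fun p => hprime) Nat.one_le_two_pow hQ hQ'
      (hdisj.symm.mono_left hQ) (hD m hm).2

end MixedWeight

section ChebyshevBounds

open Filter Asymptotics

theorem theta_eq_chebyshev_theta (N : ℕ) : theta N = Chebyshev.theta N := by
  rw [Chebyshev.theta_eq_sum_primesLE_log, theta]
  rfl

theorem theta_pos {N : ℕ} (hN : 2 ≤ N) : 0 < theta N := by
  rw [theta_eq_chebyshev_theta]
  exact Chebyshev.theta_pos (by exact_mod_cast hN)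

theorem theta_le_two_mul (N : ℕ) : theta N ≤ 2 * N := by
  rw [theta_eq_chebyshev_theta]
  refine (Chebyshev.theta_le_log4_mul_x N.cast_nonneg).trans ?_
  gcongr
  linarith [Real.log_four_eq, Real.log_two_lt_d9]

theorem isLittleO_log_add_one_add_sqrt_mul_log :
    (fun N : ℕ => Real.log (N + 1) + 2 * √N * Real.log N) =o[atTop] fun N : ℕ => (N : ℝ) := by
  have hlog : (fun x : ℝ => Real.log (x + 1)) =o[atTop] fun x => x :=
    (Real.isLittleO_log_id_atTop.comp_tendsto
      (tendsto_atTop_add_const_right _ 1 tendsto_id)).trans_isBigO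
        ((isBigO_refl _ _).add (isLittleO_const_id_atTop 1).isBigO)
  have hsqrt : (fun x : ℝ => 2 * √x * Real.log x) =o[atTop] fun x => x := by
    have h := ((isBigO_refl (fun x : ℝ => √x) atTop).const_mul_left 2).mul_isLittleO
      (isLittleO_log_rpow_atTop (r := 1 / 2) (by norm_num))
    refine h.congr' .rfl ?_
    filter_upwards [eventually_ge_atTop 0] with x hx
    rw [← Real.sqrt_eq_rpow, Real.mul_self_sqrt hx]
  exact (hlog.add hsqrt).comp_tendsto tendsto_natCast_atTop_atTop

theorem isBigO_natCast_theta : (fun N : ℕ => (N : ℝ)) =O[atTop] theta := by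
  have hlog2 : 0 < Real.log 2 := Real.log_pos one_lt_two
  refine IsBigO.of_bound (2 / Real.log 2) ?_
  filter_upwards [isLittleO_log_add_one_add_sqrt_mul_log.bound (half_pos hlog2)] with N hN
  have hlower := Chebyshev.theta_ge N
  rw [← theta_eq_chebyshev_theta] at hlower
  rw [Real.norm_natCast] at hN ⊢
  have := (Real.le_norm_self _).trans hN
  rw [div_mul_eq_mul_div, le_div_iff₀ hlog2]
  linarith [Real.le_norm_self (theta N)]

theorem exists_mul_le_theta : ∃ c ∈ Set.Ioc (0 : ℝ) 1, ∀ N : ℕ, 2 ≤ N → c * N ≤ theta N := by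
  obtain ⟨C, hC, hbound⟩ := bound_of_isBigO_nat_atTop isBigO_natCast_theta
  refine ⟨min C⁻¹ 1, ⟨lt_min (inv_pos.2 hC) one_pos, min_le_right _ _⟩, fun N hN => ?_⟩
  have hpos := theta_pos hN
  have h := hbound hpos.ne'
  rw [Real.norm_natCast, Real.norm_of_nonneg hpos.le] at h
  calc min C⁻¹ 1 * N ≤ C⁻¹ * (C * theta N) := by gcongr; exact min_le_left _ _
    _ = theta N := inv_mul_cancel_left₀ hC.ne' _

end ChebyshevBounds

section PrimeLog

/-- The weight `log k · 𝟙[k is prime]` of `weightedPrimeAvg`, extended by `0` to negative `k`. -/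
noncomputable def primeLog (k : ℤ) : ℝ := if k.toNat.Prime then Real.log k else 0

theorem primeLog_nonneg (k : ℤ) : 0 ≤ primeLog k := by
  rw [primeLog]
  split_ifs with h
  · have : 0 < k.toNat := h.pos
    exact Real.log_nonneg (by exact_mod_cast (by omega : 1 ≤ k))
  · exact le_rfl

theorem primeLog_le {n : ℕ} {k : ℤ} (hk : k ≤ (2 ^ n : ℕ)) : primeLog k ≤ n * Real.log 2 := by
  rw [primeLog]
  split_ifs with h
  · have hpos : 0 < k := Int.pos_iff_toNat_pos.2 h.pos
    rw [← Real.log_pow]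
    exact Real.log_le_log (by exact_mod_cast hpos) (by exact_mod_cast hk)
  · have := Real.log_pos one_lt_two
    positivity

theorem mem_window {N : ℕ} {F : Finset ℤ} {x y : ℤ} :
    y ∈ window N F x ↔ y ∈ F ∧ x < y ∧ y ≤ x + N :=
  mem_filter

theorem sum_indicator_mul_log_eq_sum_window (F : Finset ℤ) (N : ℕ) (x : ℤ) :
    ∑ p ∈ primesUpTo N, (F : Set ℤ).indicator (1 : ℤ → ℝ) (x + p) * Real.log p =
      ∑ y ∈ window N F x, primeLog (y - x) := by
  simp only [Set.indicator_apply, Pi.one_apply, ite_mul, one_mul, zero_mul, primeLog, mem_coe]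
  rw [← sum_filter, ← sum_filter]
  refine sum_bij' (fun p _ => x + p) (fun y _ => (y - x).toNat) ?_ ?_ ?_ ?_ ?_ <;>
    simp only [mem_filter, mem_primesUpTo, mem_window]
  · rintro p ⟨⟨hp, hpN⟩, hF⟩
    have := hp.pos
    rw [add_sub_cancel_left, Int.toNat_natCast]
    exact ⟨⟨hF, by omega, by omega⟩, hp⟩
  · rintro y ⟨⟨hF, hxy, hyN⟩, hprime⟩
    rw [Int.toNat_of_nonneg (by omega), add_sub_cancel]
    exact ⟨⟨hprime, by omega⟩, hF⟩
  · intros; omega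
  · intros; omega
  · simp

theorem sum_primeLog_window_le_theta (F : Finset ℤ) (N : ℕ) (x : ℤ) :
    ∑ y ∈ window N F x, primeLog (y - x) ≤ theta N := by
  rw [← sum_indicator_mul_log_eq_sum_window]
  refine sum_le_sum fun p _ => mul_le_of_le_one_left (Real.log_natCast_nonneg p) ?_
  exact Set.indicator_le' (fun _ _ => le_rfl) (fun _ _ => zero_le_one) _

theorem weightedPrimeAvg_indicator_eq (F : Finset ℤ) (N : ℕ) (x : ℤ) :
    weightedPrimeAvg ((F : Set ℤ).indicator 1) N x =
      (∑ y ∈ window N F x, primeLog (y - x)) / theta N := by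
  rw [weightedPrimeAvg, sum_indicator_mul_log_eq_sum_window, inv_mul_eq_div]

theorem weightedPrimeAvg_indicator_le_one (F : Finset ℤ) {N : ℕ} (hN : 2 ≤ N) (x : ℤ) :
    weightedPrimeAvg ((F : Set ℤ).indicator 1) N x ≤ 1 := by
  rw [weightedPrimeAvg_indicator_eq, div_le_one (theta_pos hN)]
  exact sum_primeLog_window_le_theta F N x

theorem mul_le_sum_primeLog_window {c l : ℝ} (hl : 0 ≤ l) {F : Finset ℤ} {N : ℕ} {x : ℤ}
    (hN : 2 ≤ N) (hc : c * N ≤ theta N)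
    (hx : l < weightedPrimeAvg ((F : Set ℤ).indicator 1) N x) :
    l * (c * N) ≤ ∑ y ∈ window N F x, primeLog (y - x) := by
  rw [weightedPrimeAvg_indicator_eq, lt_div_iff₀ (theta_pos hN)] at hx
  exact (mul_le_mul_of_nonneg_left hc hl).trans hx.le

theorem sum_primeLog_window_le_mul_card (F : Finset ℤ) (n : ℕ) (x : ℤ) :
    ∑ y ∈ window (2 ^ n) F x, primeLog (y - x) ≤ n * #(window (2 ^ n) F x) := by
  rw [mul_comm, ← nsmul_eq_mul]
  refine sum_le_card_nsmul _ _ _ fun y hy => (primeLog_le (n := n) ?_).trans ?_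
  · linarith [(mem_window.1 hy).2.2]
  · exact mul_le_of_le_one_right n.cast_nonneg (by linarith [Real.log_two_lt_d9])

end PrimeLog

section SieveMajorant

variable {m n : ℕ}

theorem selbergWeight_nonneg (m : ℕ) (k : ℤ) : 0 ≤ selbergWeight m k :=
  div_nonneg (sq_nonneg _) (selbergNormalizer_pos
    (fun _ hp => prime_of_mem_primesUpTo (mem_sdiff.1 hp).1) Nat.one_le_two_pow).le

theorem selbergWeight_of_forall_not_dvd {k : ℤ}
    (hk : ∀ p ∈ primesUpTo (2 ^ m ^ 2), ¬ (p : ℤ) ∣ k) : selbergWeight m k =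
      selbergNormalizer (primesUpTo (2 ^ m ^ 2) \ primesUpTo (2 ^ m)) (2 ^ m ^ 2) := by
  rw [selbergWeight, selbergSum_of_forall_not_dvd fun p hp => hk p (mem_sdiff.1 hp).1, sq,
    mul_self_div_self]

theorem sq_mul_log_two_le_brunWeight_mul_selbergWeight {q : ℕ} (hq : q.Prime)
    (hqm : 2 ^ m ^ 2 < q) :
    m ^ 2 * Real.log 2 ≤ 2 * (brunWeight m q * selbergWeight m q) := by
  have hpow : 2 ^ m ≤ 2 ^ m ^ 2 := Nat.pow_le_pow_right two_pos (Nat.le_self_pow two_ne_zero m)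
  have hndvd : ∀ p ∈ primesUpTo (2 ^ m ^ 2), ¬ (p : ℤ) ∣ (q : ℤ) := fun p hp hdvd => by
    obtain ⟨hprime, hple⟩ := mem_primesUpTo.1 hp
    rw [Int.natCast_dvd_natCast, Nat.prime_dvd_prime_iff_eq hprime hq] at hdvd
    omega
  have hlog := log_le_mertensProd_mul_selbergNormalizer m hpow
  rw [brunWeight_of_forall_not_dvd fun p hp => hndvd p (primesUpTo_mono hpow hp),
    selbergWeight_of_forall_not_dvd hndvd]
  rwa [Nat.cast_pow, Real.log_pow, Nat.cast_pow, Nat.cast_ofNat] at hlog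

theorem brunWeight_mul_selbergWeight_nonneg (hm : Even m) (k : ℤ) :
    0 ≤ brunWeight m k * selbergWeight m k :=
  mul_nonneg (brunWeight_mem_Icc hm k).1 (selbergWeight_nonneg m k)

theorem primeLog_le_mul_brunWeight_mul_selbergWeight (hm : Even m) (hn : n ≤ 352 * m ^ 2) {k : ℤ}
    (hmk : (2 ^ m ^ 2 : ℕ) < k) (hkn : k ≤ (2 ^ n : ℕ)) :
    primeLog k ≤ 704 * (brunWeight m k * selbergWeight m k) := by
  by_cases hprime : k.toNat.Prime
  · have hsieve := sq_mul_log_two_le_brunWeight_mul_selbergWeight hprime (Int.lt_toNat.2 hmk)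
    rw [Int.toNat_of_nonneg (hmk.le.trans' (Int.natCast_nonneg _))] at hsieve
    have hn' : (n : ℝ) ≤ 352 * (m : ℝ) ^ 2 := by exact_mod_cast hn
    have := Real.log_pos one_lt_two
    calc primeLog k ≤ n * Real.log 2 := primeLog_le hkn
      _ ≤ 352 * (m : ℝ) ^ 2 * Real.log 2 := by gcongr
      _ ≤ _ := by linarith
  · rw [primeLog, if_neg hprime]
    have := brunWeight_mul_selbergWeight_nonneg hm k
    positivity

theorem sum_primeLog_window_le (hm : Even m) (hn : n ≤ 352 * m ^ 2) (F : Finset ℤ) (x : ℤ) :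
    ∑ y ∈ window (2 ^ n) F x, primeLog (y - x) ≤ 2 * 2 ^ m ^ 2 +
      704 * ∑ y ∈ window (2 ^ n) F x, brunWeight m (y - x) * selbergWeight m (y - x) := by
  have hnear : ∑ y ∈ window (2 ^ n) F x with y ≤ x + (2 ^ m ^ 2 : ℕ), primeLog (y - x) ≤
      2 * 2 ^ m ^ 2 := by
    refine (sum_le_sum_of_subset_of_nonneg (t := window (2 ^ m ^ 2) F x) (fun y hy => ?_)
      fun _ _ _ => primeLog_nonneg _).trans ((sum_primeLog_window_le_theta F _ x).trans ?_)
    · simp only [mem_filter, mem_window] at hy ⊢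
      exact ⟨hy.1.1, hy.1.2.1, hy.2⟩
    · exact_mod_cast theta_le_two_mul (2 ^ m ^ 2)
  have hfar : ∑ y ∈ window (2 ^ n) F x with ¬ y ≤ x + (2 ^ m ^ 2 : ℕ), primeLog (y - x) ≤
      704 * ∑ y ∈ window (2 ^ n) F x, brunWeight m (y - x) * selbergWeight m (y - x) := by
    rw [mul_sum]
    refine (sum_le_sum fun y hy => ?_).trans (sum_le_sum_of_subset_of_nonneg (filter_subset _ _)
      fun _ _ _ => mul_nonneg (by norm_num) (brunWeight_mul_selbergWeight_nonneg hm _))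
    obtain ⟨hy, hyx⟩ := mem_filter.1 hy
    refine primeLog_le_mul_brunWeight_mul_selbergWeight hm hn ?_ ?_
    · linarith [not_le.1 hyx]
    · linarith [(mem_window.1 hy).2.2]
  rw [← sum_filter_add_sum_filter_not _ (fun y => y ≤ x + (2 ^ m ^ 2 : ℕ))]
  exact add_le_add hnear hfar

end SieveMajorant

section SieveError

/-- The dyadic sequence of sieve levels starting at `2 * h`; they are even, which makes Brun's
weight nonnegative. -/
def sieveLevel (h j : ℕ) : ℕ := 2 ^ j * (2 * h)

variable {h i : ℕ}

theorem sieveLevel_zero (h : ℕ) : sieveLevel h 0 = 2 * h := one_mul _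

theorem sieveLevel_succ (h j : ℕ) : sieveLevel h (j + 1) = 2 * sieveLevel h j := by
  rw [sieveLevel, sieveLevel, pow_succ', mul_assoc]

theorem sieveLevel_mono (h : ℕ) : Monotone (sieveLevel h) :=
  monotone_nat_of_le_succ fun j => by rw [sieveLevel_succ]; omega

theorem even_sieveLevel (h j : ℕ) : Even (sieveLevel h j) := (even_two_mul h).mul_left _

theorem sieveLevel_pos (hh : 1 ≤ h) (j : ℕ) : 1 ≤ sieveLevel h j :=
  Nat.mul_pos (by positivity) (by omega)

theorem inv_two_pow_sieveLevel_le (hh : 1 ≤ h) (j : ℕ) :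
    (1 : ℝ) / 2 ^ sieveLevel h j ≤ ((1 / 2) ^ h * (1 / 2) ^ j) ^ 2 := by
  rw [← one_div_pow, ← pow_add, ← pow_mul]
  refine pow_le_pow_of_le_one (by norm_num) (by norm_num) ?_
  have hj : j + 1 ≤ 2 ^ j := Nat.lt_two_pow_self
  calc (h + j) * 2 ≤ (j + 1) * (2 * h) := by nlinarith
    _ ≤ sieveLevel h j := Nat.mul_le_mul_right _ hj

theorem MaximalDecay.exists_sum_sum_abs_forwardAvg_le {W : ℕ → ℤ → ℝ} (hW : MaximalDecay W) :
    ∃ K : ℝ, 0 < K ∧ ∀ h, 1 ≤ h → ∀ (E F : Finset ℤ) (N : ℤ → ℕ) (J : ℤ → Finset ℕ),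
      (∀ x ∈ E, ∀ j ∈ J x, 2 ^ (88 * sieveLevel h j ^ 2) ≤ N x) →
        ∑ x ∈ E, ∑ j ∈ J x, |forwardAvg (W (sieveLevel h j)) (N x) F x| ≤
          √(#F * #E) * (K * (1 / 2) ^ h) := by
  obtain ⟨C, hC, hdecay⟩ := hW
  refine ⟨2 * √C, by positivity, fun h hh E F N J hJ => ?_⟩
  have hlevel : ∀ j, ∑ x ∈ E with j ∈ J x, |forwardAvg (W (sieveLevel h j)) (N x) F x| ≤
      √(#F * #E) * (√C * (1 / 2) ^ h) * (1 / 2) ^ j := fun j => by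
    refine le_of_sq_le_sq ((hdecay _ (sieveLevel_pos hh j) _ F N fun x hx => ?_).trans ?_)
      (by positivity)
    · exact hJ x (mem_filter.1 hx).1 j (mem_filter.1 hx).2
    calc (#F : ℝ) * #{x ∈ E | j ∈ J x} * (C / 2 ^ sieveLevel h j)
        ≤ #F * #E * (C * ((1 / 2) ^ h * (1 / 2) ^ j) ^ 2) := by
          rw [div_eq_mul_one_div C]
          gcongr
          · exact filter_subset _ _
          · exact inv_two_pow_sieveLevel_le hh j
      _ = √(#F * #E) ^ 2 * (√C ^ 2 * ((1 / 2) ^ h * (1 / 2) ^ j) ^ 2) := by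
          rw [Real.sq_sqrt (by positivity), Real.sq_sqrt hC.le]
      _ = _ := by ring
  have hgeom : ∑ j ∈ E.biUnion J, (1 / 2 : ℝ) ^ j ≤ 2 :=
    (summable_geometric_two.sum_le_tsum _ fun _ _ => by positivity).trans_eq tsum_geometric_two
  calc ∑ x ∈ E, ∑ j ∈ J x, |forwardAvg (W (sieveLevel h j)) (N x) F x|
      = ∑ j ∈ E.biUnion J, ∑ x ∈ E with j ∈ J x, |forwardAvg (W (sieveLevel h j)) (N x) F x| :=
        sum_comm' fun x j => by simp only [mem_biUnion, mem_filter]; tauto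
    _ ≤ √(#F * #E) * (√C * (1 / 2) ^ h) * ∑ j ∈ E.biUnion J, (1 / 2) ^ j := by
        rw [mul_sum]; exact sum_le_sum fun j _ => hlevel j
    _ ≤ √(#F * #E) * (√C * (1 / 2) ^ h) * 2 := by gcongr
    _ = _ := by ring

/-- The error made when the average of the sieve majorant of level `sieveLevel h i` is compared
with `mertensProd (2 * h)` times a plain average: the error of Brun's sieve at the initial level,
the increments of the Brun weights along the levels, and the oscillation of the Selberg weight at
the final level. -/
noncomputable def sieveError (h i N : ℕ) (F : Finset ℤ) (x : ℤ) : ℝ :=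
  |forwardAvg (brunError (sieveLevel h 0)) N F x| +
    ∑ j ∈ range i, |forwardAvg (fun k =>
      brunWeight (2 * sieveLevel h j) k - brunWeight (sieveLevel h j) k) N F x| +
    |forwardAvg (fun k =>
      brunWeight (sieveLevel h i) k * (selbergWeight (sieveLevel h i) k - 1)) N F x|

theorem exists_sum_sieveError_le : ∃ K : ℝ, 0 < K ∧ ∀ h, 1 ≤ h →
    ∀ (E F : Finset ℤ) (n i : ℤ → ℕ), (∀ x ∈ E, 88 * sieveLevel h (i x) ^ 2 ≤ n x) →
      ∑ x ∈ E, sieveError h (i x) (2 ^ n x) F x ≤ √(#F * #E) * (K * (1 / 2) ^ h) := by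
  obtain ⟨K₁, hK₁, herror⟩ := maximalDecay_brunError.exists_sum_sum_abs_forwardAvg_le
  obtain ⟨K₂, hK₂, hincrement⟩ :=
    maximalDecay_brunWeight_two_mul_sub.exists_sum_sum_abs_forwardAvg_le
  obtain ⟨K₃, hK₃, hselberg⟩ :=
    maximalDecay_brunWeight_mul_selbergWeight_sub_one.exists_sum_sum_abs_forwardAvg_le
  refine ⟨K₁ + K₂ + K₃, by positivity, fun h hh E F n i hn => ?_⟩
  have hscale : ∀ x ∈ E, ∀ j ≤ i x, 2 ^ (88 * sieveLevel h j ^ 2) ≤ 2 ^ n x := fun x hx j hj =>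
    Nat.pow_le_pow_right two_pos <| (hn x hx).trans' <| by gcongr; exact sieveLevel_mono h hj
  have hE₁ := herror h hh E F (fun x => 2 ^ n x) (fun _ => {0}) fun x hx j hj =>
    hscale x hx j (by simp_all)
  have hE₂ := hincrement h hh E F (fun x => 2 ^ n x) (fun x => range (i x)) fun x hx j hj =>
    hscale x hx j (mem_range.1 hj).le
  have hE₃ := hselberg h hh E F (fun x => 2 ^ n x) (fun x => {i x}) fun x hx j hj =>
    hscale x hx j (mem_singleton.1 hj).le
  simp only [sum_singleton] at hE₁ hE₃
  simp only [sieveError, sum_add_distrib]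
  linarith

theorem exists_sq_mul_card_le_of_le_sieveError : ∃ K : ℝ, 0 < K ∧ ∀ h, 1 ≤ h →
    ∀ (E F : Finset ℤ) (n i : ℤ → ℕ) (a : ℝ), 0 ≤ a →
      (∀ x ∈ E, 88 * sieveLevel h (i x) ^ 2 ≤ n x) →
      (∀ x ∈ E, a ≤ sieveError h (i x) (2 ^ n x) F x) →
        a ^ 2 * #E ≤ K * (1 / 2) ^ (2 * h) * #F := by
  obtain ⟨K, hK, hsum⟩ := exists_sum_sieveError_le
  refine ⟨K ^ 2, by positivity, fun h hh E F n i a ha hn hE => ?_⟩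
  rcases E.eq_empty_or_nonempty with rfl | hne
  · rw [card_empty, Nat.cast_zero, mul_zero]
    positivity
  have hcard : (0 : ℝ) < #E := by exact_mod_cast hne.card_pos
  have hle : #E * a ≤ √(#F * #E) * (K * (1 / 2) ^ h) := by
    rw [← nsmul_eq_mul]
    exact (card_nsmul_le_sum E _ a hE).trans (hsum h hh E F n i hn)
  refine le_of_mul_le_mul_left ?_ hcard
  calc #E * (a ^ 2 * #E) = (#E * a) ^ 2 := by ring
    _ ≤ (√(#F * #E) * (K * (1 / 2) ^ h)) ^ 2 := by gcongr
    _ = #E * (K ^ 2 * (1 / 2) ^ (2 * h) * #F) := by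
        rw [mul_pow, Real.sq_sqrt (by positivity), mul_comm 2 h, pow_mul]; ring

theorem brunWeight_sieveLevel_eq (h i : ℕ) (k : ℤ) :
    brunWeight (sieveLevel h i) k = brunWeight (sieveLevel h 0) k +
      ∑ j ∈ range i, (brunWeight (2 * sieveLevel h j) k - brunWeight (sieveLevel h j) k) := by
  simp only [← sieveLevel_succ]
  rw [sum_range_sub fun j => brunWeight (sieveLevel h j) k, add_sub_cancel]

theorem brunWeight_mul_selbergWeight_le (h i : ℕ) (k : ℤ) :
    brunWeight (sieveLevel h i) k * selbergWeight (sieveLevel h i) k ≤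
      mertensProd (2 * h) + brunError (sieveLevel h 0) k +
      ∑ j ∈ range i, (brunWeight (2 * sieveLevel h j) k - brunWeight (sieveLevel h j) k) +
      brunWeight (sieveLevel h i) k * (selbergWeight (sieveLevel h i) k - 1) := by
  have hbrun := (brunWeight_mem_Icc (even_sieveLevel h 0) k).2
  rw [mul_sub_one, brunWeight_sieveLevel_eq h i k]
  rw [sieveLevel_zero] at hbrun ⊢
  linarith

theorem forwardAvg_brunWeight_mul_selbergWeight_le (h i N : ℕ) (F : Finset ℤ) (x : ℤ) :
    forwardAvg (fun k => brunWeight (sieveLevel h i) k * selbergWeight (sieveLevel h i) k) N F x ≤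
      mertensProd (2 * h) * #(window N F x) / N + sieveError h i N F x := by
  have hsum := sum_le_sum fun y (_ : y ∈ window N F x) =>
    brunWeight_mul_selbergWeight_le h i (y - x)
  simp only [sum_add_distrib, sum_const, nsmul_eq_mul] at hsum
  rw [sum_comm] at hsum
  calc forwardAvg (fun k => brunWeight (sieveLevel h i) k * selbergWeight (sieveLevel h i) k) N F x
      ≤ _ / N := div_le_div_of_nonneg_right hsum N.cast_nonneg
    _ = mertensProd (2 * h) * #(window N F x) / N +
        (forwardAvg (brunError (sieveLevel h 0)) N F x + ∑ j ∈ range i, forwardAvg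
          (fun k => brunWeight (2 * sieveLevel h j) k - brunWeight (sieveLevel h j) k) N F x +
          forwardAvg (fun k => brunWeight (sieveLevel h i) k *
            (selbergWeight (sieveLevel h i) k - 1)) N F x) := by
        simp only [forwardAvg, ← sum_div]; ring
    _ ≤ _ := by
        rw [sieveError]
        gcongr <;> exact le_abs_self _

end SieveError

section LevelSets

theorem mul_card_le_mul_card_of_le_mul_card_window_div {a V : ℝ} (ha : 0 ≤ a) (hV : 0 < V)
    {N : ℤ → ℕ} (E F : Finset ℤ) (hN : ∀ x ∈ E, 1 ≤ N x)
    (hE : ∀ x ∈ E, a ≤ V * #(window (N x) F x) / N x) : a * #E ≤ V * #F := by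
  have hmax : a / V * #E ≤ #F := by
    refine mul_card_le_card_of_forall_mul_le_card_window (by positivity) E F hN fun x hx => ?_
    have hNx : (0 : ℝ) < N x := by exact_mod_cast hN x hx
    rw [div_mul_eq_mul_div, div_le_iff₀' hV, ← le_div_iff₀ hNx]
    exact hE x hx
  rwa [div_mul_eq_mul_div, div_le_iff₀' hV] at hmax

theorem exists_sieveLevel_scale {h n : ℕ} (hh : 1 ≤ h) (hn : 88 * (2 * h) ^ 2 ≤ n) :
    ∃ i, 88 * sieveLevel h i ^ 2 ≤ n ∧ n ≤ 352 * sieveLevel h i ^ 2 := by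
  have hpos : 0 < 88 * (2 * h) ^ 2 := by positivity
  set q := n / (88 * (2 * h) ^ 2) with hq
  have hq1 : 1 ≤ q := (Nat.one_le_div_iff hpos).2 hn
  have hlevel (i : ℕ) : 88 * sieveLevel h i ^ 2 = 4 ^ i * (88 * (2 * h) ^ 2) := by
    rw [sieveLevel, mul_pow, ← pow_mul, mul_comm i, pow_mul]
    ring
  refine ⟨Nat.log 4 q, ?_, ?_⟩
  · rw [hlevel]
    exact (Nat.mul_le_mul_right _ (Nat.pow_log_le_self 4 (by omega))).trans
      (Nat.div_mul_le_self _ _)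
  · have hlt : n < 4 ^ (Nat.log 4 q + 1) * (88 * (2 * h) ^ 2) :=
      (Nat.div_lt_iff_lt_mul hpos).1 (hq ▸ Nat.lt_pow_succ_log_self (by norm_num) q)
    rw [pow_succ] at hlt
    linarith [hlevel (Nat.log 4 q)]

/- The scale `n ≤ 352 m²` makes the level-`m` sieve majorant available, and `88 m² ≤ n` absorbs the
primes `≤ 2 ^ m ^ 2` which the majorant misses. -/
theorem mul_le_main_add_sieveError {c l : ℝ} (hc0 : 0 ≤ c) (hl : 0 ≤ l) {h i n : ℕ} (hh : 1 ≤ h)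
    (hlc : 4 ≤ l * c * 2 ^ (2 * h)) (hθ : c * (2 ^ n : ℕ) ≤ theta (2 ^ n))
    (hn : 88 * sieveLevel h i ^ 2 ≤ n) (hn' : n ≤ 352 * sieveLevel h i ^ 2)
    {F : Finset ℤ} {x : ℤ} (hx : l < weightedPrimeAvg ((F : Set ℤ).indicator 1) (2 ^ n) x) :
    c / 1408 * l ≤ mertensProd (2 * h) * #(window (2 ^ n) F x) / (2 ^ n : ℕ) +
      sieveError h i (2 ^ n) F x := by
  refine le_trans ?_ (forwardAvg_brunWeight_mul_selbergWeight_le h i (2 ^ n) F x)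
  set m := sieveLevel h i
  have hm : 2 * h ≤ m := Nat.le_mul_of_pos_left _ (by positivity)
  have hmn : m ^ 2 + 2 * h ≤ n := by nlinarith
  have htwo : 2 ≤ 2 ^ n := Nat.le_self_pow (by omega) 2
  have hlower := mul_le_sum_primeLog_window hl htwo hθ hx
  have hupper := sum_primeLog_window_le (even_sieveLevel h i) hn' F x
  have hsmall : (2 : ℝ) * 2 ^ m ^ 2 ≤ l * (c * (2 ^ n : ℕ)) / 2 := by
    have hpow : (2 : ℝ) ^ m ^ 2 * 2 ^ (2 * h) ≤ 2 ^ n := by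
      rw [← pow_add]
      exact pow_le_pow_right₀ one_le_two hmn
    calc (2 : ℝ) * 2 ^ m ^ 2 = 4 * 2 ^ m ^ 2 / 2 := by ring
      _ ≤ l * c * 2 ^ (2 * h) * 2 ^ m ^ 2 / 2 := by gcongr
      _ = l * (c * (2 ^ m ^ 2 * 2 ^ (2 * h))) / 2 := by ring
      _ ≤ l * (c * (2 ^ n : ℕ)) / 2 := by push_cast; gcongr
  rw [forwardAvg, le_div_iff₀ (by positivity)]
  linarith

theorem mul_card_le_of_scale_le {c l : ℝ} (hc : 0 ≤ c)
    (hθ : ∀ N : ℕ, 2 ≤ N → c * N ≤ theta N) (hl : 0 ≤ l) {M : ℕ} (hM : 0 < M)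
    {E F : Finset ℤ} {n : ℤ → ℕ} (hn : ∀ x ∈ E, 1 ≤ n x) (hnM : ∀ x ∈ E, n x ≤ M)
    (hE : ∀ x ∈ E, l < weightedPrimeAvg ((F : Set ℤ).indicator 1) (2 ^ n x) x) :
    l * c * #E ≤ M * #F := by
  refine mul_card_le_mul_card_of_le_mul_card_window_div (N := fun x => 2 ^ n x) (by positivity)
    (by exact_mod_cast hM) E F (fun x _ => Nat.one_le_two_pow) fun x hx => ?_
  have htwo : 2 ≤ 2 ^ n x := Nat.le_self_pow (by have := hn x hx; omega) 2
  rw [le_div_iff₀ (by positivity), mul_assoc]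
  calc l * (c * (2 ^ n x : ℕ))
      ≤ ∑ y ∈ window (2 ^ n x) F x, primeLog (y - x) :=
        mul_le_sum_primeLog_window hl htwo (hθ _ htwo) (hE x hx)
    _ ≤ n x * #(window (2 ^ n x) F x) := sum_primeLog_window_le_mul_card F (n x) x
    _ ≤ M * #(window (2 ^ n x) F x) := by gcongr; exact hnM x hx

theorem mul_card_le_of_le_mertensProd_mul {h : ℕ} (hh : 1 ≤ h) {a : ℝ} (ha : 0 ≤ a)
    {E F : Finset ℤ} {n : ℤ → ℕ}
    (hE : ∀ x ∈ E, a ≤ mertensProd (2 * h) * #(window (2 ^ n x) F x) / (2 ^ n x : ℕ)) :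
    a * #E ≤ 16 * (2 * h : ℕ) ^ 2 * #F := by
  refine (mul_card_le_mul_card_of_le_mul_card_window_div (N := fun x => 2 ^ n x) ha
    (one_pos.trans_le (one_le_mertensProd _)) E F (fun x _ => Nat.one_le_two_pow) hE).trans ?_
  gcongr
  exact mertensProd_le (by omega)

theorem exists_mul_card_le_of_mul_le_sieveError {κ : ℝ} (hκ : 0 < κ) :
    ∃ K : ℝ, 0 < K ∧ ∀ (h : ℕ) (l : ℝ), 1 ≤ h → 1 ≤ l * 2 ^ (2 * h) →
      ∀ (E F : Finset ℤ) (n i : ℤ → ℕ), (∀ x ∈ E, 88 * sieveLevel h (i x) ^ 2 ≤ n x) →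
      (∀ x ∈ E, κ * l ≤ sieveError h (i x) (2 ^ n x) F x) → l * #E ≤ K * #F := by
  obtain ⟨K, hK, herror⟩ := exists_sq_mul_card_le_of_le_sieveError
  refine ⟨K / κ ^ 2, by positivity, fun h l hh hl E F n i hn hE => ?_⟩
  have hl0 : 0 < l := pos_of_mul_pos_left (one_pos.trans_le hl) (by positivity)
  have hpow : (1 / 2 : ℝ) ^ (2 * h) ≤ l := by
    rwa [one_div_pow, div_le_iff₀ (by positivity)]
  rw [div_mul_eq_mul_div, le_div_iff₀' (by positivity)]
  refine le_of_mul_le_mul_left ?_ hl0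
  calc l * (κ ^ 2 * (l * #E)) = (κ * l) ^ 2 * #E := by ring
    _ ≤ K * (1 / 2) ^ (2 * h) * #F := herror h hh E F n i (κ * l) (by positivity) hn hE
    _ ≤ K * l * #F := by gcongr
    _ = l * (K * #F) := by ring

theorem exists_mul_card_le_of_le_scale {c : ℝ} (hc : c ∈ Set.Ioc (0 : ℝ) 1)
    (hθ : ∀ N : ℕ, 2 ≤ N → c * N ≤ theta N) :
    ∃ K : ℝ, 0 < K ∧ ∀ (h : ℕ) (l : ℝ), 1 ≤ h → 0 < l → 4 ≤ l * c * 2 ^ (2 * h) →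
      ∀ (E F : Finset ℤ) (n : ℤ → ℕ), (∀ x ∈ E, 88 * (2 * h) ^ 2 ≤ n x) →
      (∀ x ∈ E, l < weightedPrimeAvg ((F : Set ℤ).indicator 1) (2 ^ n x) x) →
        l * #E ≤ K * (2 * h : ℕ) ^ 2 * #F := by
  classical
  obtain ⟨hc0, hc1⟩ := hc
  set κ := c / 1408 / 2
  have hκ : 0 < κ := by positivity
  obtain ⟨K, hK, herror⟩ := exists_mul_card_le_of_mul_le_sieveError hκ
  refine ⟨16 / κ + K, by positivity, fun h l hh hl hlc E F n hn hE => ?_⟩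
  have hscale (x : ℤ) (hx : x ∈ E) := exists_sieveLevel_scale hh (hn x hx)
  choose! i hi hi' using hscale
  set P : ℤ → Prop := fun x =>
    κ * l ≤ mertensProd (2 * h) * #(window (2 ^ n x) F x) / (2 ^ n x : ℕ)
  have hmain : κ * (l * #{x ∈ E | P x}) ≤ 16 * (2 * h : ℕ) ^ 2 * #F := by
    rw [← mul_assoc]
    exact mul_card_le_of_le_mertensProd_mul hh (by positivity) fun x hx => (mem_filter.1 hx).2
  have herr : l * #{x ∈ E | ¬P x} ≤ K * #F := by
    have hl1 : l * c * 2 ^ (2 * h) ≤ l * 1 * 2 ^ (2 * h) := by gcongr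
    refine herror h l hh (by linarith) _ F n i (fun x hx => hi x (mem_filter.1 hx).1) fun x hx => ?_
    obtain ⟨hxE, hxP⟩ := mem_filter.1 hx
    have hnx : n x ≠ 0 := ((show 0 < 88 * (2 * h) ^ 2 by positivity).trans_le (hn x hxE)).ne'
    have hpt := mul_le_main_add_sieveError hc0.le hl.le hh hlc (hθ _ (Nat.le_self_pow hnx 2))
      (hi x hxE) (hi' x hxE) (hE x hxE)
    have hhalf : c / 1408 * l = κ * l + κ * l := by ring
    linarith [not_le.1 hxP]
  have hh1 : (1 : ℝ) ≤ (2 * h : ℕ) ^ 2 := one_le_pow₀ (by exact_mod_cast (by omega))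
  calc l * #E = l * #{x ∈ E | P x} + l * #{x ∈ E | ¬P x} := by
        rw [← card_filter_add_card_filter_not (s := E) P, Nat.cast_add, mul_add]
    _ ≤ 16 * (2 * h : ℕ) ^ 2 * #F / κ + K * (2 * h : ℕ) ^ 2 * #F := by
        refine add_le_add (by rwa [le_div_iff₀' hκ]) (herr.trans ?_)
        gcongr
        exact le_mul_of_one_le_right hK.le hh1
    _ = _ := by ring

theorem exists_four_le_mul_two_pow {c : ℝ} (hc : c ∈ Set.Ioc (0 : ℝ) 1) :
    ∃ D : ℝ, 0 < D ∧ ∀ l ∈ Set.Ioo (0 : ℝ) 1, ∃ h : ℕ, 1 ≤ h ∧ 4 ≤ l * c * 2 ^ (2 * h) ∧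
      ((2 * h : ℕ) : ℝ) ≤ D * (1 - Real.log l) := by
  obtain ⟨hc0, hc1⟩ := hc
  have hlog4 : 0 < Real.log (4 / c) :=
    Real.log_pos (by rw [lt_div_iff₀ hc0]; linarith)
  refine ⟨Real.log (4 / c) / Real.log 2 + 2 + 1 / Real.log 2, by positivity, fun l ⟨hl0, hl1⟩ => ?_⟩
  have hlogl : Real.log l < 0 := Real.log_neg hl0 hl1
  set t := (Real.log (4 / c) - Real.log l) / (2 * Real.log 2) with ht
  have ht0 : 0 < t := div_pos (by linarith) (by positivity)
  refine ⟨⌈t⌉₊, Nat.ceil_pos.2 ht0, ?_, ?_⟩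
  · have hceil : Real.log (4 / c) - Real.log l ≤ ⌈t⌉₊ * (2 * Real.log 2) :=
      (div_le_iff₀ (by positivity)).1 (Nat.le_ceil t)
    rw [← Real.log_div (by positivity) hl0.ne', ← mul_assoc, mul_comm (⌈t⌉₊ : ℝ)] at hceil
    have hlog : Real.log (4 / c / l) ≤ Real.log (2 ^ (2 * ⌈t⌉₊)) := by
      rw [Real.log_pow]
      exact_mod_cast hceil
    have hle := (Real.log_le_log_iff (by positivity) (by positivity)).1 hlog
    rw [div_div, div_le_iff₀ (by positivity)] at hle
    linarith
  · have htwo : 2 * t = Real.log (4 / c) / Real.log 2 + 1 / Real.log 2 * -Real.log l := by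
      rw [ht]; field_simp; ring
    have hceil := (Nat.ceil_lt_add_one ht0.le).le
    have hq : 0 ≤ Real.log (4 / c) / Real.log 2 * -Real.log l :=
      mul_nonneg (by positivity) (by linarith)
    have hr : 0 < 1 / Real.log 2 := by positivity
    push_cast
    linarith

theorem exists_mul_card_le : ∃ C : ℝ, 0 < C ∧ ∀ (F E : Finset ℤ), ∀ l ∈ Set.Ioo (0 : ℝ) 1,
    (∀ x ∈ E, ∃ n : ℕ, 1 ≤ n ∧ l < weightedPrimeAvg ((F : Set ℤ).indicator 1) (2 ^ n) x) →
      l * #E ≤ C * (1 - Real.log l) ^ 2 * #F := by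
  obtain ⟨c, hc, hθ⟩ := exists_mul_le_theta
  obtain ⟨K, hK, hlarge⟩ := exists_mul_card_le_of_le_scale hc hθ
  obtain ⟨D, hD, hlevel⟩ := exists_four_le_mul_two_pow hc
  have hc0 := hc.1
  refine ⟨(88 / c + K) * D ^ 2, by positivity, fun F E l hl hE => ?_⟩
  obtain ⟨h, hh, hlc, hhD⟩ := hlevel l hl
  choose! n hn hnE using hE
  set M := 88 * (2 * h) ^ 2 with hM
  have hlow : c * (l * #{x ∈ E | n x < M}) ≤ M * #F := by
    rw [← mul_assoc, mul_comm c]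
    exact mul_card_le_of_scale_le hc0.le hθ hl.1.le (by positivity)
      (fun x hx => hn x (mem_filter.1 hx).1) (fun x hx => (mem_filter.1 hx).2.le)
      fun x hx => hnE x (mem_filter.1 hx).1
  have hhigh : l * #{x ∈ E | ¬n x < M} ≤ K * (2 * h : ℕ) ^ 2 * #F :=
    hlarge h l hh hl.1 hlc _ F n (fun x hx => not_lt.1 (mem_filter.1 hx).2)
      fun x hx => hnE x (mem_filter.1 hx).1
  calc l * #E = l * #{x ∈ E | n x < M} + l * #{x ∈ E | ¬n x < M} := by
        rw [← card_filter_add_card_filter_not (s := E) (n · < M), Nat.cast_add, mul_add]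
    _ ≤ M * #F / c + K * (2 * h : ℕ) ^ 2 * #F :=
        add_le_add (by rwa [le_div_iff₀' hc0]) hhigh
    _ = (88 / c + K) * (2 * h : ℕ) ^ 2 * #F := by rw [hM]; push_cast; ring
    _ ≤ (88 / c + K) * (D * (1 - Real.log l)) ^ 2 * #F := by gcongr
    _ = _ := by ring

end LevelSets

section Extrapolation

theorem rpow_sub_one_mul_sq_le {l p : ℝ} (hl : l ∈ Set.Ioo (0 : ℝ) 1) (hp : 1 ≤ p) :
    l ^ (p - 1) * ((p - 1) * (1 - Real.log l)) ^ 2 ≤ 2 * Real.exp p := by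
  set s := (p - 1) * (1 - Real.log l) with hs
  have hs0 : 0 ≤ s :=
    mul_nonneg (by linarith) (by linarith [Real.log_neg hl.1 hl.2])
  have hsq : s ^ 2 ≤ 2 * Real.exp s := by linarith [Real.quadratic_le_exp_of_nonneg hs0]
  calc l ^ (p - 1) * s ^ 2 ≤ l ^ (p - 1) * (2 * Real.exp s) :=
        mul_le_mul_of_nonneg_left hsq (Real.rpow_nonneg hl.1.le _)
    _ = 2 * Real.exp (p - 1) := by
        rw [Real.rpow_def_of_pos hl.1, mul_left_comm, ← Real.exp_add, hs]
        ring_nf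
    _ ≤ 2 * Real.exp p := by gcongr; linarith

theorem mul_rpow_one_div_le_of_mul_le {C l p A B : ℝ} (hC : 0 ≤ C) (hl : l ∈ Set.Ioo (0 : ℝ) 1)
    (hp : 1 < p) (hA : 0 ≤ A) (hB : 0 ≤ B) (h : l * A ≤ C * (1 - Real.log l) ^ 2 * B) :
    l * A ^ (1 / p) ≤
      (2 * C + 1) * Real.exp 1 * (p - 1) ^ (-(2 / p)) * B ^ (1 / p) := by
  have hl0 := hl.1
  have hs : 0 < p - 1 := by linarith
  have hp0 : p ≠ 0 := by linarith
  have hpow : l ^ p * A ≤ 2 * C * Real.exp p * (p - 1) ^ (-2 : ℝ) * B := by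
    have hpm : (p - 1) ^ (-2 : ℝ) = ((p - 1) ^ 2)⁻¹ := by
      rw [Real.rpow_neg hs.le, Real.rpow_ofNat]
    rw [hpm, mul_right_comm, ← div_eq_mul_inv, le_div_iff₀ (by positivity)]
    calc l ^ p * A * (p - 1) ^ 2 = l ^ (p - 1) * (p - 1) ^ 2 * (l * A) := by
          rw [Real.rpow_sub_one hl0.ne']; field_simp
      _ ≤ l ^ (p - 1) * (p - 1) ^ 2 * (C * (1 - Real.log l) ^ 2 * B) := by gcongr
      _ = l ^ (p - 1) * ((p - 1) * (1 - Real.log l)) ^ 2 * (C * B) := by ring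
      _ ≤ 2 * Real.exp p * (C * B) :=
          mul_le_mul_of_nonneg_right (rpow_sub_one_mul_sq_le hl hp.le) (by positivity)
      _ = 2 * C * Real.exp p * B := by ring
  have hexp : Real.exp p ^ (1 / p) = Real.exp 1 := by
    rw [← Real.exp_mul, mul_one_div_cancel hp0]
  calc l * A ^ (1 / p) = (l ^ p * A) ^ (1 / p) := by
        rw [Real.mul_rpow (by positivity) hA, ← Real.rpow_mul hl0.le, mul_one_div_cancel hp0,
          Real.rpow_one]
    _ ≤ (2 * C * Real.exp p * (p - 1) ^ (-2 : ℝ) * B) ^ (1 / p) := by gcongr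
    _ = (2 * C) ^ (1 / p) * Real.exp 1 * (p - 1) ^ (-(2 / p)) * B ^ (1 / p) := by
        rw [Real.mul_rpow (by positivity) hB, Real.mul_rpow (by positivity) (by positivity),
          Real.mul_rpow (by positivity) (by positivity), hexp, ← Real.rpow_mul hs.le,
          neg_mul, mul_one_div]
    _ ≤ (2 * C + 1) * Real.exp 1 * (p - 1) ^ (-(2 / p)) * B ^ (1 / p) := by
        gcongr
        calc (2 * C) ^ (1 / p) ≤ (2 * C + 1) ^ (1 / p) := by gcongr; linarith
          _ ≤ 2 * C + 1 := Real.rpow_le_self_of_one_le (by linarith)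
              ((div_le_one (by linarith)).2 hp.le)

theorem finite_of_forall_finset_card_le {α : Type*} {S : Set α} {B : ℝ}
    (h : ∀ t : Finset α, ↑t ⊆ S → (#t : ℝ) ≤ B) : S.Finite := by
  by_contra hinf
  obtain ⟨k, hk⟩ := exists_nat_gt B
  obtain ⟨t, ht, rfl⟩ := Set.Infinite.exists_subset_card_eq hinf k
  exact hk.not_ge (h t ht)

end Extrapolation

end PrimeMaximal

/-- Restricted weak type `(p₀, p₀)` inequality, uniform in `p₀ ∈ (1, ∞)` up to the factor
`(p₀ − 1)^{−2/p₀}`, for the maximal function of the weighted averages along the primes. -/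
theorem stmt_19 :
    ∃ C : ℝ, 0 < C ∧
      ∀ (F : Finset ℤ) (p₀ : ℝ), 1 < p₀ →
        ∀ l : ℝ, 0 < l →
          {x : ℤ | ∃ n : ℕ, 1 ≤ n ∧
              l < weightedPrimeAvg ((F : Set ℤ).indicator 1) (2 ^ n) x}.Finite ∧
          l * (({x : ℤ | ∃ n : ℕ, 1 ≤ n ∧
              l < weightedPrimeAvg ((F : Set ℤ).indicator 1) (2 ^ n) x}.ncard : ℝ)) ^ (1 / p₀) ≤
            C * (p₀ - 1) ^ (-(2 / p₀)) * ((F.card : ℝ)) ^ (1 / p₀) := by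
  obtain ⟨C, hC, hlevel⟩ := PrimeMaximal.exists_mul_card_le
  refine ⟨(2 * C + 1) * Real.exp 1, by positivity, fun F p₀ hp l hl => ?_⟩
  set S := {x : ℤ | ∃ n : ℕ, 1 ≤ n ∧ l < weightedPrimeAvg ((F : Set ℤ).indicator 1) (2 ^ n) x}
  rcases lt_or_ge l 1 with hl1 | hl1
  · have hfin : S.Finite := PrimeMaximal.finite_of_forall_finset_card_le fun t ht =>
      (le_div_iff₀' hl).2 (hlevel F t l ⟨hl, hl1⟩ ht)
    refine ⟨hfin, PrimeMaximal.mul_rpow_one_div_le_of_mul_le hC.le ⟨hl, hl1⟩ hp (by positivity)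
      (by positivity) ?_⟩
    rw [Set.ncard_eq_toFinset_card S hfin]
    exact hlevel F hfin.toFinset l ⟨hl, hl1⟩ fun x hx => hfin.mem_toFinset.1 hx
  · have hempty : S = ∅ := Set.eq_empty_of_forall_notMem fun x ⟨n, hn, hx⟩ => by
      have hle := PrimeMaximal.weightedPrimeAvg_indicator_le_one F
        (Nat.le_self_pow (Nat.one_le_iff_ne_zero.1 hn) 2) x
      linarith
    rw [hempty, Set.ncard_empty, Nat.cast_zero, Real.zero_rpow (by positivity), mul_zero]
    have hfactor := Real.rpow_nonneg (sub_nonneg.2 hp.le) (-(2 / p₀))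
    exact ⟨Set.finite_empty, by positivity⟩
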